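/- Let g be a solution of the Ricci flow on Ω × [0,T) and fix (x,t) ∈ Ω × (0,T). Then the curvature components of g̃_{ε,δ} at (x,t) have the following limits: for every δ > 0, lim_{ε→∞} R̃^l_{ijk}(ε,δ) = R^l_{ijk} for 1 ≤ i,j,k,l ≤ n, and lim_{ε→∞} R̃^l_{0jk}(ε,δ) = −∇_k R^l_j + ∇^l R_{jk} for 1 ≤ j,k,l ≤ n; and the iterated limit lim_{δ→0} lim_{ε→∞} R̃^l_{i00}(ε,δ) = ∂R^l_i/∂t − ½ ∇_i∇^l R − R^m_i R^l_m + (1/(2t)) R^l_i = ΔR^l_i − ½ ∇_i∇^l R + 2 g^{lm} R^q_{pim} R^p_q − R^m_i R^l_m + (1/(2t)) R^l_i for 1 ≤ i,l ≤ n. Thus the limiting curvature components are exactly the components of Hamilton's Harnack expression Z + (1/(2t)) R_{ij}W_iW_j. -/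

import Mathlib

/- Common local-coordinate framework for the Chow–Chu space-time
   interpretation of Hamilton's Harnack inequality for the Ricci flow. -/

noncomputable section
open scoped BigOperators
open Filter

namespace CC

/-- A time-dependent scalar field on `ℝⁿ × ℝ` (space variable first, then time). -/
abbrev Fld (n : ℕ) := (Fin n → ℝ) → ℝ → ℝ

/-- A time-dependent 2-tensor field (e.g. a metric) in local coordinates. -/
abbrev Met (n : ℕ) := Fin n → Fin n → Fld n

variable {n : ℕ}

/-- Spatial partial derivative `∂ᵢ` of a time-dependent scalar field. -/
def spd (i : Fin n) (u : Fld n) : Fld n :=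
  fun x t => fderiv ℝ (fun y => u y t) x (Pi.single i 1)

/-- Time partial derivative `∂/∂t` of a time-dependent scalar field. -/
def tpd (u : Fld n) : Fld n :=
  fun x t => deriv (fun s => u x s) t

/-- Christoffel symbols `Γ^k_{ij} = ½ g^{kl}(∂ᵢ g_{jl} + ∂ⱼ g_{il} − ∂ₗ g_{ij})`. -/
def Gamma (g ginv : Met n) (k i j : Fin n) : Fld n :=
  fun x t => (1/2) * ∑ l, ginv k l x t *
    (spd i (g j l) x t + spd j (g i l) x t - spd l (g i j) x t)

/-- Riemann curvature `R^l_{ijk} = ∂ᵢΓ^l_{jk} − ∂ⱼΓ^l_{ik} + Γ^m_{jk}Γ^l_{im} − Γ^m_{ik}Γ^l_{jm}`. -/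
def Riem (g ginv : Met n) (l i j k : Fin n) : Fld n :=
  fun x t => spd i (Gamma g ginv l j k) x t - spd j (Gamma g ginv l i k) x t
    + ∑ m, (Gamma g ginv m j k x t * Gamma g ginv l i m x t
          - Gamma g ginv m i k x t * Gamma g ginv l j m x t)

/-- Ricci curvature `R_{jk} = R^p_{pjk}`. -/
def Ric (g ginv : Met n) (j k : Fin n) : Fld n :=
  fun x t => ∑ p, Riem g ginv p p j k x t

/-- Scalar curvature `R = g^{jk} R_{jk}`. -/
def Scal (g ginv : Met n) : Fld n :=
  fun x t => ∑ j, ∑ k, ginv j k x t * Ric g ginv j k x t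

/-- Ricci curvature with raised index, `R^k_i = g^{km} R_{im}`. -/
def RicUp (g ginv : Met n) (k i : Fin n) : Fld n :=
  fun x t => ∑ m, ginv k m x t * Ric g ginv i m x t

/-- Fully lowered Riemann tensor `R_{ijkl} = g_{lm} R^m_{ijk}`. -/
def RiemLow (g ginv : Met n) (i j k l : Fin n) : Fld n :=
  fun x t => ∑ m, g l m x t * Riem g ginv m i j k x t

/-- Covariant derivative of a 1-form: `∇ᵢω_j = ∂ᵢω_j − Γ^p_{ij} ω_p`. -/
def cd1 (g ginv : Met n) (i : Fin n) (ω : Fin n → Fld n) (j : Fin n) : Fld n :=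
  fun x t => spd i (ω j) x t - ∑ p, Gamma g ginv p i j x t * ω p x t

/-- Covariant derivative of a (0,2)-tensor. -/
def cd2 (g ginv : Met n) (i : Fin n) (A : Fin n → Fin n → Fld n) (j k : Fin n) : Fld n :=
  fun x t => spd i (A j k) x t - ∑ p, Gamma g ginv p i j x t * A p k x t
    - ∑ p, Gamma g ginv p i k x t * A j p x t

/-- Covariant derivative of a (1,1)-tensor `T^l_j`:
`∇_a T^l_j = ∂_a T^l_j + Γ^l_{ap} T^p_j − Γ^p_{aj} T^l_p`. -/
def cd11 (g ginv : Met n) (a : Fin n) (T : Fin n → Fin n → Fld n) (l j : Fin n) : Fld n :=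
  fun x t => spd a (T l j) x t + ∑ p, Gamma g ginv l a p x t * T p j x t
    - ∑ p, Gamma g ginv p a j x t * T l p x t

/-- Covariant derivative of a vector field: `∇ᵢV^l = ∂ᵢV^l + Γ^l_{ip} V^p`. -/
def cdVec (g ginv : Met n) (i : Fin n) (V : Fin n → Fld n) (l : Fin n) : Fld n :=
  fun x t => spd i (V l) x t + ∑ p, Gamma g ginv l i p x t * V p x t

/-- Hessian of a scalar: `∇ᵢ∇ⱼu = ∂ᵢ∂ⱼu − Γ^p_{ij}∂_p u`. -/
def hess (g ginv : Met n) (u : Fld n) (i j : Fin n) : Fld n :=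
  fun x t => spd i (spd j u) x t - ∑ p, Gamma g ginv p i j x t * spd p u x t

/-- Gradient (raised differential) of the scalar curvature: `∇^l R = g^{lm}∂_m R`. -/
def gradScal (g ginv : Met n) (l : Fin n) : Fld n :=
  fun x t => ∑ m, ginv l m x t * spd m (Scal g ginv) x t

/-- Rough Laplacian `Δ = g^{pq}∇_p∇_q` on 1-forms. -/
def lap1 (g ginv : Met n) (V : Fin n → Fld n) (j : Fin n) : Fld n :=
  fun x t => ∑ p, ∑ q, ginv p q x t *
    (spd p (cd1 g ginv q V j) x t
     - ∑ m, Gamma g ginv m p q x t * cd1 g ginv m V j x t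
     - ∑ m, Gamma g ginv m p j x t * cd1 g ginv q V m x t)

/-- Rough Laplacian `Δ = g^{pq}∇_p∇_q` on (0,2)-tensors. -/
def lap02 (g ginv : Met n) (A : Fin n → Fin n → Fld n) (i j : Fin n) : Fld n :=
  fun x t => ∑ p, ∑ q, ginv p q x t *
    (spd p (cd2 g ginv q A i j) x t
     - ∑ m, Gamma g ginv m p q x t * cd2 g ginv m A i j x t
     - ∑ m, Gamma g ginv m p i x t * cd2 g ginv q A m j x t
     - ∑ m, Gamma g ginv m p j x t * cd2 g ginv q A i m x t)

/-- Rough Laplacian `Δ = g^{pq}∇_p∇_q` on (1,1)-tensors. -/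
def lap11 (g ginv : Met n) (T : Fin n → Fin n → Fld n) (l i : Fin n) : Fld n :=
  fun x t => ∑ p, ∑ q, ginv p q x t *
    (spd p (cd11 g ginv q T l i) x t
     + ∑ m, Gamma g ginv l p m x t * cd11 g ginv q T m i x t
     - ∑ m, Gamma g ginv m p q x t * cd11 g ginv m T l i x t
     - ∑ m, Gamma g ginv m p i x t * cd11 g ginv q T l m x t)

/-- Laplacian of the scalar curvature `ΔR = g^{ij}(∂ᵢ∂ⱼR − Γ^p_{ij}∂_pR)`. -/
def lapScal (g ginv : Met n) : Fld n :=
  fun x t => ∑ i, ∑ j, ginv i j x t * hess g ginv (Scal g ginv) i j x t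

/-- Squared norm of the Ricci tensor `|Ric|² = g^{ik}g^{jl}R_{ij}R_{kl}`. -/
def normRicSq (g ginv : Met n) : Fld n :=
  fun x t => ∑ i, ∑ j, ∑ k, ∑ l,
    ginv i k x t * ginv j l x t * Ric g ginv i j x t * Ric g ginv k l x t

/-- Hamilton's tensor `P_{ijk} = ∇ᵢR_{jk} − ∇ⱼR_{ik}`. -/
def Pt (g ginv : Met n) (i j k : Fin n) : Fld n :=
  fun x t => cd2 g ginv i (Ric g ginv) j k x t - cd2 g ginv j (Ric g ginv) i k x t

/-- Hamilton's tensor `M_{ij} = ΔR_{ij} − ½∇ᵢ∇ⱼR + 2R_{kijl}R_{kl} − R_{ik}R_{kj}`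
(repeated lower indices contracted with `g^{··}`). -/
def Mt (g ginv : Met n) (i j : Fin n) : Fld n :=
  fun x t => lap02 g ginv (Ric g ginv) i j x t
    - (1/2) * hess g ginv (Scal g ginv) i j x t
    + 2 * ∑ k, ∑ l, ∑ a, ∑ b, ginv k a x t * ginv l b x t *
        RiemLow g ginv k i j l x t * Ric g ginv a b x t
    - ∑ k, ∑ a, ginv k a x t * Ric g ginv i k x t * Ric g ginv a j x t

/-- Hamilton's Harnack quadratic
`Z(U,W) = M_{ij}W_iW_j − 2P_{ijk}U_{ij}W_k + R_{ijkl}U_{ij}U_{lk}`,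
repeated lower indices being contracted with `g^{··}`. -/
def Zharnack (g ginv : Met n) (U : Fin n → Fin n → ℝ) (W : Fin n → ℝ) : Fld n :=
  fun x t =>
    (∑ i, ∑ j, ∑ p, ∑ q, ginv i p x t * ginv j q x t * Mt g ginv i j x t * W p * W q)
    - 2 * (∑ i, ∑ j, ∑ k, ∑ p, ∑ q, ∑ r,
        ginv i p x t * ginv j q x t * ginv k r x t * Pt g ginv i j k x t * U p q * W r)
    + (∑ i, ∑ j, ∑ k, ∑ l, ∑ p, ∑ q, ∑ r, ∑ s,
        ginv i p x t * ginv j q x t * ginv k r x t * ginv l s x t *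
          RiemLow g ginv i j k l x t * U p q * U s r)

/-- `g` (with pointwise inverse `ginv`) is a smooth solution of the Ricci flow
`∂g_{ij}/∂t = −2R_{ij}` on `Ω × [0,T)`. -/
def RicciFlow (Ωs : Set (Fin n → ℝ)) (T : ℝ) (g ginv : Met n) : Prop :=
  IsOpen Ωs ∧ IsConnected Ωs ∧ 0 < T ∧
  (∀ i j, ContDiffOn ℝ (⊤ : ℕ∞) (fun p : (Fin n → ℝ) × ℝ => g i j p.1 p.2)
      (Ωs ×ˢ Set.Ico 0 T)) ∧
  (∀ x ∈ Ωs, ∀ t ∈ Set.Ico (0:ℝ) T,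
    (∀ i j, g i j x t = g j i x t) ∧
    (∀ v : Fin n → ℝ, v ≠ 0 → 0 < ∑ i, ∑ j, g i j x t * v i * v j) ∧
    (∀ i j, ∑ k, g i k x t * ginv k j x t = (if i = j then (1:ℝ) else 0)) ∧
    (∀ i j, tpd (g i j) x t = -2 * Ric g ginv i j x t))

/-! ### Space-time objects -/

/-- A space-time connection on `M̃ = Ω × [0,T)`: the index `0` is time,
the index `i.succ` is the spatial direction `i`. -/
abbrev Con (n : ℕ) := Fin (n+1) → Fin (n+1) → Fin (n+1) → Fld n

/-- Space-time partial derivative: `∂₀ = ∂/∂t` and `∂_{i.succ} = ∂ᵢ`. -/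
def spdT (i : Fin (n+1)) (u : Fld n) : Fld n :=
  Fin.cases (tpd u) (fun j => spd j u) i

/-- Curvature of a space-time connection:
`R̃^l_{ijk} = ∂ᵢΓ̃^l_{jk} − ∂ⱼΓ̃^l_{ik} + Σ_m (Γ̃^m_{jk}Γ̃^l_{im} − Γ̃^m_{ik}Γ̃^l_{jm})`. -/
def RiemT (Γ : Con n) (l i j k : Fin (n+1)) : Fld n :=
  fun x t => spdT i (Γ l j k) x t - spdT j (Γ l i k) x t
    + ∑ m : Fin (n+1), (Γ m j k x t * Γ l i m x t - Γ m i k x t * Γ l j m x t)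

/-- Ricci tensor of a space-time connection: `R̃_{jk} = Σ_p R̃^p_{pjk}`. -/
def RicT (Γ : Con n) (j k : Fin (n+1)) : Fld n :=
  fun x t => ∑ p : Fin (n+1), RiemT Γ p p j k x t

/-- Space-time covariant derivative of a (0,2)-tensor with respect to a connection. -/
def cdT2 (Γ : Con n) (a : Fin (n+1)) (A : Fin (n+1) → Fin (n+1) → Fld n)
    (b c : Fin (n+1)) : Fld n :=
  fun x t => spdT a (A b c) x t - ∑ p : Fin (n+1), Γ p a b x t * A p c x t
    - ∑ p : Fin (n+1), Γ p a c x t * A b p x t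

/-- Space-time covariant derivative of a (1,1)-tensor with respect to a connection. -/
def cdT11 (Γ : Con n) (a : Fin (n+1)) (T : Fin (n+1) → Fin (n+1) → Fld n)
    (l j : Fin (n+1)) : Fld n :=
  fun x t => spdT a (T l j) x t + ∑ p : Fin (n+1), Γ l a p x t * T p j x t
    - ∑ p : Fin (n+1), Γ p a j x t * T l p x t

/-- Time shift of a field by `τ`. -/
def shift (τ : ℝ) (u : Fld n) : Fld n := fun x t => u x (t + τ)

/-- The degenerate inverse metric on space-time (no time shift):
`g̃^{ij} = g^{ij}` for spatial `i,j` and `g̃^{ij} = 0` if `i = 0` or `j = 0`. -/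
def gdegM (ginv : Met n) (i j : Fin (n+1)) : Fld n :=
  Fin.cases (fun _ _ => (0:ℝ))
    (fun i' => Fin.cases (fun _ _ => (0:ℝ)) (fun j' => ginv i' j') j) i

/-- The degenerate inverse metric `g̃_τ` on `M̃_τ`, shifted in time by `τ`. -/
def gdeg (ginv : Met n) (τ : ℝ) (i j : Fin (n+1)) : Fld n :=
  shift τ (gdegM ginv i j)

/-- The Chow–Chu connection `Γ̃_τ` on space-time, defined by (A1)–(A4)
(with time shift `τ`). -/
def GammaA (g ginv : Met n) (τ : ℝ) : Con n :=
  fun k i j =>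
    Fin.cases (fun _ _ => (0:ℝ))
      (fun k' =>
        Fin.cases
          (Fin.cases
            (shift τ (fun x t => -(1/2) * ∑ m, ginv k' m x t * spd m (Scal g ginv) x t))
            (fun j' => shift τ (fun x t => -(RicUp g ginv k' j' x t))) j)
          (fun i' =>
            Fin.cases (shift τ (fun x t => -(RicUp g ginv k' i' x t)))
              (fun j' => shift τ (Gamma g ginv k' i' j')) j) i) k

/-! ### The modified flow -/

/-- `∇ᵢ∇^k f = g^{km} ∇ᵢ∇ₘ f`. -/
def hessUp (g ginv : Met n) (f : Fld n) (i k : Fin n) : Fld n :=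
  fun x t => ∑ m, ginv k m x t * hess g ginv f i m x t

/-- `∇^p f = g^{pq} ∂_q f`. -/
def gradf (ginv : Met n) (f : Fld n) (p : Fin n) : Fld n :=
  fun x t => ∑ q, ginv p q x t * spd q f x t

/-- The potential `−½R + ∂f/∂t − ½|∇f|²`. -/
def Fpot (g ginv : Met n) (f : Fld n) : Fld n :=
  fun x t => -(1/2) * Scal g ginv x t + tpd f x t
    - (1/2) * ∑ p, ∑ q, ginv p q x t * spd p f x t * spd q f x t

/-- The space-time connection `Γ̃` of the modified flow, defined by (D1)–(D4). -/
def GammaD (g ginv : Met n) (f : Fld n) : Con n :=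
  fun k i j =>
    Fin.cases (fun _ _ => (0:ℝ))
      (fun k' =>
        Fin.cases
          (Fin.cases
            (fun x t => ∑ l, ginv k' l x t * spd l (Fpot g ginv f) x t)
            (fun j' => fun x t => -(RicUp g ginv k' j' x t) + hessUp g ginv f j' k' x t) j)
          (fun i' =>
            Fin.cases
              (fun x t => -(RicUp g ginv k' i' x t) + hessUp g ginv f i' k' x t)
              (fun j' => Gamma g ginv k' i' j') j) i) k

/-- Space-time Hessian `∇̃_a∇̃_b f = ∂_a∂_b f − Σ_p Γ̃^p_{ab} ∂_p f` (with `∂₀ = ∂/∂t`). -/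
def hessT (Γ : Con n) (f : Fld n) (a b : Fin (n+1)) : Fld n :=
  fun x t => spdT a (spdT b f) x t - ∑ p : Fin (n+1), Γ p a b x t * spdT p f x t

/-- Space-time Ricci tensor with first index raised by the degenerate metric:
`R̃^k_i = Σ_{p=1}^n g^{kp} R̃_{pi}` for spatial `k`, and `R̃^0_i = 0`. -/
def ricTup (ginv : Met n) (Γ : Con n) (k i : Fin (n+1)) : Fld n :=
  Fin.cases (fun _ _ => (0:ℝ))
    (fun k' => fun x t => ∑ p, ginv k' p x t * RicT Γ p.succ i x t) k

/-- `g` is a smooth solution of the modified Ricci flow with potential `f`: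
`∂g_{ij}/∂t = −2R_{ij} + 2∇ᵢ∇ⱼf` on `Ω × [0,T)`. -/
def ModifiedRicciFlow (Ωs : Set (Fin n → ℝ)) (T : ℝ) (g ginv : Met n) (f : Fld n) : Prop :=
  IsOpen Ωs ∧ IsConnected Ωs ∧ 0 < T ∧
  (∀ i j, ContDiffOn ℝ (⊤ : ℕ∞) (fun p : (Fin n → ℝ) × ℝ => g i j p.1 p.2)
      (Ωs ×ˢ Set.Ico 0 T)) ∧
  ContDiffOn ℝ (⊤ : ℕ∞) (fun p : (Fin n → ℝ) × ℝ => f p.1 p.2) (Ωs ×ˢ Set.Ico 0 T) ∧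
  (∀ x ∈ Ωs, ∀ t ∈ Set.Ico (0:ℝ) T,
    (∀ i j, g i j x t = g j i x t) ∧
    (∀ v : Fin n → ℝ, v ≠ 0 → 0 < ∑ i, ∑ j, g i j x t * v i * v j) ∧
    (∀ i j, ∑ k, g i k x t * ginv k j x t = (if i = j then (1:ℝ) else 0)) ∧
    (∀ i j, tpd (g i j) x t = -2 * Ric g ginv i j x t + 2 * hess g ginv f i j x t))

/-! ### The approximating metrics `g̃_{ε,δ}` -/

/-- The space-time metric `g̃_{ε,δ}`: spatial part `g`, `g̃_{00} = R + ε/(2(t+δ))`,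
mixed components zero. -/
def gE (g ginv : Met n) (ε δ : ℝ) (i j : Fin (n+1)) : Fld n :=
  Fin.cases
    (Fin.cases (fun x t => Scal g ginv x t + ε / (2 * (t + δ)))
      (fun _ => fun _ _ => (0:ℝ)) j)
    (fun i' => Fin.cases (fun _ _ => (0:ℝ)) (fun j' => g i' j') j) i

/-- The (block-diagonal) inverse of `g̃_{ε,δ}`. -/
def gEinv (g ginv : Met n) (ε δ : ℝ) (i j : Fin (n+1)) : Fld n :=
  Fin.cases
    (Fin.cases (fun x t => (Scal g ginv x t + ε / (2 * (t + δ)))⁻¹)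
      (fun _ => fun _ _ => (0:ℝ)) j)
    (fun i' => Fin.cases (fun _ _ => (0:ℝ)) (fun j' => ginv i' j') j) i

/-- The Levi-Civita Christoffel symbols of `g̃_{ε,δ}`:
`Γ̃^k_{ij} = ½ g̃^{kl}(∂ᵢg̃_{jl} + ∂ⱼg̃_{il} − ∂ₗg̃_{ij})`, indices in `0,…,n`. -/
def GammaE (g ginv : Met n) (ε δ : ℝ) : Con n :=
  fun k i j => fun x t => (1/2) * ∑ l : Fin (n+1), gEinv g ginv ε δ k l x t *
    (spdT i (gE g ginv ε δ j l) x t + spdT j (gE g ginv ε δ i l) x t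
      - spdT l (gE g ginv ε δ i j) x t)

end CC

/-!
Everything except the limit itself is algebra over the ring of smooth functions on an open set of
space-time, with commuting derivations `∂_i`, `∂_t`: there the connection and the curvature are
matrices, and the metric is a matrix whose derivatives determine the connection. The covariant
Koszul formula gives `∂_t Γ`, the Bianchi and Ricci identities turn the resulting `∂_t Ric` into
`Δ Ric + 2 Rm * Ric - 2 Ric ∘ Ric`, and raising an index cancels the quadratic term.

Since `g̃` depends on `ε` only through `g̃_{00}`, and there only through a summand depending on `t`
alone, the symbols `Γ̃^l_{ij}` with `l ≥ 1` do not depend on `ε` at all. The symbols `Γ̃^0_{ij}`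
carry the factor `1 / g̃_{00}` and tend to `0`, except that `Γ̃^0_{00} → -1 / (2 (t + δ))`, the
logarithmic derivative of the square root of `ε / (2 (t + δ))`. This exception is the source of the
term `R_{ij} / (2t)`.
-/

section MatrixDerivation

open Matrix

variable {R A ι : Type*} [CommSemiring R] [CommRing A] [Algebra R A]

/-- The entrywise action of a derivation on square matrices. -/
def matrixDeriv (d : Derivation R A A) : Matrix ι ι A →ₗ[R] Matrix ι ι A :=
  (d : A →ₗ[R] A).mapMatrix

theorem matrixDeriv_apply (d : Derivation R A A) (M : Matrix ι ι A) (i j : ι) :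
    matrixDeriv d M i j = d (M i j) :=
  rfl

theorem matrixDeriv_transpose (d : Derivation R A A) (M : Matrix ι ι A) :
    matrixDeriv d Mᵀ = (matrixDeriv d M)ᵀ :=
  rfl

theorem matrixDeriv_comm {d e : Derivation R A A} (h : ∀ a, d (e a) = e (d a))
    (M : Matrix ι ι A) : matrixDeriv d (matrixDeriv e M) = matrixDeriv e (matrixDeriv d M) := by
  ext i j
  exact h _

theorem trace_matrixDeriv [Fintype ι] (d : Derivation R A A) (M : Matrix ι ι A) :
    trace (matrixDeriv d M) = d (trace M) :=
  (map_sum d _ _).symm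

theorem matrixDeriv_one [DecidableEq ι] (d : Derivation R A A) :
    matrixDeriv d (1 : Matrix ι ι A) = 0 := by
  ext i j
  rw [matrixDeriv_apply, one_apply]
  split_ifs <;> simp

theorem matrixDeriv_mul [Fintype ι] (d : Derivation R A A) (M N : Matrix ι ι A) :
    matrixDeriv d (M * N) = matrixDeriv d M * N + M * matrixDeriv d N := by
  ext i j
  simp only [matrixDeriv_apply, mul_apply, Matrix.add_apply, map_sum, Derivation.leibniz,
    smul_eq_mul, ← Finset.sum_add_distrib]
  exact Finset.sum_congr rfl fun _ _ => by ring

theorem matrixDeriv_of_mul_eq_one [Fintype ι] [DecidableEq ι] (d : Derivation R A A)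
    {M N : Matrix ι ι A} (h : M * N = 1) :
    matrixDeriv d N = -(N * matrixDeriv d M * N) := by
  have hd := congrArg (N * matrixDeriv d ·) h
  simp only [matrixDeriv_mul, matrixDeriv_one, mul_zero, mul_add, ← mul_assoc,
    mul_eq_one_comm.mp h, one_mul] at hd
  exact eq_neg_of_add_eq_zero_right hd

end MatrixDerivation

/-- A metric `g` in a commuting frame together with its Levi-Civita connection, expressed in an
algebra `A` of functions: `D i` is the `i`-th frame derivation, `ginv` the inverse metric, and
`Γ i` the connection matrix, with `Γ i l k = Γ^l_{ik}`. -/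
structure LeviCivitaFrame (R A ι : Type*) [CommSemiring R] [CommRing A] [Algebra R A]
    [Fintype ι] [DecidableEq ι] where
  D : ι → Derivation R A A
  D_comm : ∀ i j a, D i (D j a) = D j (D i a)
  g : Matrix ι ι A
  ginv : Matrix ι ι A
  g_transpose : g.transpose = g
  g_mul_ginv : g * ginv = 1
  Γ : ι → Matrix ι ι A
  Γ_symm : ∀ i l k, Γ i l k = Γ k l i
  D_g : ∀ i, matrixDeriv (D i) g = (Γ i).transpose * g + g * Γ i

namespace LeviCivitaFrame

open Matrix

variable {R A ι : Type*} [CommSemiring R] [CommRing A] [Algebra R A] [Fintype ι] [DecidableEq ι]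
  (X : LeviCivitaFrame R A ι)

theorem ginv_mul_g : X.ginv * X.g = 1 := mul_eq_one_comm.mp X.g_mul_ginv

theorem ginv_mul_g_mul (M : Matrix ι ι A) : X.ginv * (X.g * M) = M := by
  rw [← mul_assoc, X.ginv_mul_g, one_mul]

theorem g_mul_ginv_mul (M : Matrix ι ι A) : X.g * (X.ginv * M) = M := by
  rw [← mul_assoc, X.g_mul_ginv, one_mul]

theorem ginv_transpose : X.ginvᵀ = X.ginv := by
  have h : X.ginvᵀ * X.g = 1 := by
    simpa [X.g_transpose] using congrArg transpose X.g_mul_ginv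
  exact left_inv_eq_right_inv h X.g_mul_ginv

theorem ginv_symm (i j : ι) : X.ginv i j = X.ginv j i :=
  congrFun₂ X.ginv_transpose j i

section Connection

/-- The covariant derivative `∇_a ω_j` of a 1-form. -/
def cov₁ (a : ι) (ω : ι → A) (j : ι) : A :=
  X.D a (ω j) - ∑ m, X.Γ a m j * ω m

/-- The covariant derivative `∇_a M_{jk}` of a (0,2)-tensor. -/
def cov₂ (a : ι) (M : Matrix ι ι A) : Matrix ι ι A :=
  matrixDeriv (X.D a) M - (X.Γ a)ᵀ * M - M * X.Γ a

/-- The covariant derivative `∇_a T_{bjk}` of a (0,3)-tensor, with `T b j k = T_{bjk}`. -/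
def cov₃ (a : ι) (T : ι → Matrix ι ι A) (b : ι) : Matrix ι ι A :=
  X.cov₂ a (T b) - ∑ m, X.Γ a m b • T m

/-- The covariant derivative `∇_a T_{ijlk}` of a (0,4)-tensor, with `T i j l k = T_{ijlk}`. -/
def cov₄ (a : ι) (T : ι → ι → Matrix ι ι A) (i j : ι) : Matrix ι ι A :=
  X.cov₂ a (T i j) - ∑ m, X.Γ a m i • T m j - ∑ m, X.Γ a m j • T i m

/-- The covariant derivative `∇_a M^l_k` of a (1,1)-tensor, with `M l k = M^l_k`. -/
def covEnd (a : ι) (M : Matrix ι ι A) : Matrix ι ι A :=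
  matrixDeriv (X.D a) M + X.Γ a * M - M * X.Γ a

/-- The metric contraction `g^{il} M_{il}`. -/
def contr : Matrix ι ι A →ₗ[A] A :=
  traceLinearMap ι A A ∘ₗ LinearMap.mulLeft A X.ginv

theorem cov₂_apply (a : ι) (M : Matrix ι ι A) (j k : ι) :
    X.cov₂ a M j k = X.D a (M j k) - ∑ p, X.Γ a p j * M p k - ∑ p, X.Γ a p k * M j p := by
  simp only [cov₂, Matrix.sub_apply, matrixDeriv_apply, mul_apply, transpose_apply,
    mul_comm (M _ _)]

theorem cov₃_apply (a : ι) (T : ι → Matrix ι ι A) (b j k : ι) :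
    X.cov₃ a T b j k = X.D a (T b j k) - ∑ p, X.Γ a p j * T b p k - ∑ p, X.Γ a p k * T b j p
      - ∑ m, X.Γ a m b * T m j k := by
  simp only [cov₃, Matrix.sub_apply, cov₂_apply, Matrix.sum_apply, Matrix.smul_apply, smul_eq_mul]

theorem cov₄_apply (a : ι) (T : ι → ι → Matrix ι ι A) (i j l k : ι) :
    X.cov₄ a T i j l k = X.D a (T i j l k) - ∑ p, X.Γ a p l * T i j p k
      - ∑ p, X.Γ a p k * T i j l p - ∑ m, X.Γ a m i * T m j l k
      - ∑ m, X.Γ a m j * T i m l k := by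
  simp only [cov₄, Matrix.sub_apply, cov₂_apply, Matrix.sum_apply, Matrix.smul_apply, smul_eq_mul]

theorem cov₂_transpose (a : ι) (M : Matrix ι ι A) : X.cov₂ a Mᵀ = (X.cov₂ a M)ᵀ := by
  simp only [cov₂, matrixDeriv_transpose, transpose_sub, transpose_mul, transpose_transpose]
  abel

theorem cov₂_zsmul (a : ι) (c : ℤ) (M : Matrix ι ι A) : X.cov₂ a (c • M) = c • X.cov₂ a M := by
  simp only [cov₂, map_zsmul, mul_smul_comm, smul_mul_assoc, smul_sub]

theorem covEnd_ginv_mul (a : ι) (M : Matrix ι ι A) :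
    X.covEnd a (X.ginv * M) = X.ginv * X.cov₂ a M := by
  have hD : matrixDeriv (X.D a) X.ginv = -(X.ginv * (X.Γ a)ᵀ) - X.Γ a * X.ginv := by
    rw [matrixDeriv_of_mul_eq_one _ X.g_mul_ginv, X.D_g, mul_add, ginv_mul_g_mul, add_mul,
      mul_assoc, mul_assoc, X.g_mul_ginv, mul_one, neg_add']
  rw [covEnd, cov₂, matrixDeriv_mul, hD]
  noncomm_ring

theorem contr_eq_trace (M : Matrix ι ι A) : X.contr M = trace (X.ginv * M) :=
  rfl

theorem contr_apply (M : Matrix ι ι A) : X.contr M = ∑ i, ∑ l, X.ginv i l * M i l := by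
  simp only [contr_eq_trace, trace, diag, mul_apply]
  rw [Finset.sum_comm]
  simp only [X.ginv_symm]

theorem contr_of_column (M : ι → Matrix ι ι A) (k : ι) :
    X.contr (of fun p l => M p l k) = ∑ p, (X.ginv * M p) p k := by
  simp only [contr_apply, of_apply, mul_apply]

theorem contr_transpose (M : Matrix ι ι A) : X.contr Mᵀ = X.contr M := by
  rw [contr_eq_trace, contr_eq_trace, ← trace_transpose, transpose_mul, transpose_transpose,
    X.ginv_transpose, trace_mul_comm]

theorem contr_contr_comm (T : ι → ι → Matrix ι ι A) :
    X.contr (of fun i l => X.contr (T i l)) =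
      X.contr (of fun j k => X.contr (of fun i l => T i l j k)) := by
  have h (M : Matrix ι ι A) : X.contr M = ∑ x : ι × ι, X.ginv x.1 x.2 * M x.1 x.2 := by
    rw [contr_apply, Fintype.sum_prod_type]
  simp only [h, of_apply, Finset.mul_sum]
  rw [Finset.sum_comm]
  simp only [mul_left_comm]

theorem contr_cov₂ (a : ι) (M : Matrix ι ι A) : X.contr (X.cov₂ a M) = X.D a (X.contr M) := by
  rw [contr_eq_trace, contr_eq_trace, ← covEnd_ginv_mul, covEnd, trace_sub, trace_add,
    trace_mul_comm (X.Γ a), add_sub_cancel_right, trace_matrixDeriv]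

theorem contr_cov₃ (a : ι) (T : ι → Matrix ι ι A) (b : ι) :
    X.contr (X.cov₃ a T b) = X.cov₁ a (fun m => X.contr (T m)) b := by
  simp only [cov₃, cov₁, map_sub, map_sum, map_smul, smul_eq_mul, contr_cov₂]

theorem contr_cov₃_left (a : ι) (T : ι → Matrix ι ι A) (k : ι) :
    X.contr (of fun p l => X.cov₃ a T p l k) =
      X.cov₁ a (fun m => X.contr (of fun p l => T p l m)) k := by
  have h : (of fun p l => X.cov₃ a T p l k) =
      X.cov₂ a (of fun p l => T p l k) - ∑ m, X.Γ a m k • of fun p l => T p l m := by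
    ext p l
    simp only [cov₃_apply, cov₂_apply, of_apply, Matrix.sub_apply, Matrix.sum_apply,
      Matrix.smul_apply, smul_eq_mul]
    ring
  simp only [h, cov₁, map_sub, map_sum, map_smul, smul_eq_mul, contr_cov₂]

theorem contr_cov₄ (a : ι) (T : ι → ι → Matrix ι ι A) (j k : ι) :
    X.contr (of fun i l => X.cov₄ a T i j l k) =
      X.cov₂ a (of fun j k => X.contr (of fun i l => T i j l k)) j k := by
  have h : (of fun i l => X.cov₄ a T i j l k) =
      X.cov₂ a (of fun i l => T i j l k) - ∑ m, X.Γ a m j • (of fun i l => T i m l k)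
        - ∑ m, X.Γ a m k • of fun i l => T i j l m := by
    ext i l
    simp only [cov₄_apply, cov₂_apply, of_apply, Matrix.sub_apply, Matrix.sum_apply,
      Matrix.smul_apply, smul_eq_mul]
    ring
  simp only [h, cov₂_apply, of_apply, map_sub, map_sum, map_smul, smul_eq_mul, contr_cov₂]

end Connection

section Curvature

/-- The curvature of the connection, with `curv i j l k = R^l_{ijk}`. -/
def curv (i j : ι) : Matrix ι ι A :=
  matrixDeriv (X.D i) (X.Γ j) - matrixDeriv (X.D j) (X.Γ i) + X.Γ i * X.Γ j - X.Γ j * X.Γ i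

/-- The fully covariant curvature, with `riem i j l k = g_{lm} R^m_{ijk}`. -/
def riem (i j : ι) : Matrix ι ι A := X.g * X.curv i j

/-- The Ricci tensor `R_{jk} = R^p_{pjk}`. -/
def ric : Matrix ι ι A := of fun j k => ∑ p, X.curv p j p k

/-- The Ricci endomorphism, with `ricUp l k = R^l_k`. -/
def ricUp : Matrix ι ι A := X.ginv * X.ric

theorem ric_apply (j k : ι) : X.ric j k = ∑ p, X.curv p j p k :=
  rfl

theorem ginv_mul_riem (i j : ι) : X.ginv * X.riem i j = X.curv i j :=
  X.ginv_mul_g_mul _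

theorem curv_antisymm (i j : ι) : X.curv i j = -X.curv j i := by
  unfold curv
  abel

theorem riem_antisymm (i j : ι) : X.riem i j = -X.riem j i := by
  rw [riem, curv_antisymm, mul_neg, riem]

theorem riem_antisymm_apply (i j l k : ι) : X.riem i j l k = -X.riem j i l k :=
  congrFun₂ (X.riem_antisymm i j) l k

theorem riem_transpose (i j : ι) : (X.riem i j)ᵀ = -X.riem i j := by
  have h := matrixDeriv_comm (X.D_comm i j) X.g
  simp only [X.D_g, map_add, matrixDeriv_mul, matrixDeriv_transpose] at h
  rw [← sub_eq_zero] at h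
  rw [eq_neg_iff_add_eq_zero, ← h]
  simp only [riem, curv, transpose_mul, transpose_sub, transpose_add, X.g_transpose]
  noncomm_ring

theorem riem_antisymm_right (i j l k : ι) : X.riem i j l k = -X.riem i j k l :=
  congrFun₂ (X.riem_transpose i j) k l

theorem curv_cyclic (i j k l : ι) :
    X.curv i j l k + X.curv j k l i + X.curv k i l j = 0 := by
  have hΓ (a b c : ι) : ∑ m, X.Γ a l m * X.Γ b m c = ∑ m, X.Γ a l m * X.Γ c m b := by
    simp only [X.Γ_symm b _ c]
  simp only [curv, Matrix.add_apply, Matrix.sub_apply, matrixDeriv_apply, mul_apply]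
  rw [X.Γ_symm j l k, X.Γ_symm i l k, X.Γ_symm i l j, hΓ i j k, hΓ j i k, hΓ k i j]
  ring

theorem riem_cyclic (i j k l : ι) :
    X.riem i j l k + X.riem j k l i + X.riem k i l j = 0 := by
  simp only [riem, mul_apply, ← Finset.sum_add_distrib, ← mul_add, curv_cyclic, mul_zero,
    Finset.sum_const_zero]

theorem contr_riem (j k : ι) : X.contr (of fun i l => X.riem i j l k) = X.ric j k := by
  simp only [contr_of_column (M := fun i => X.riem i j), ginv_mul_riem, ric_apply]

variable [Invertible (2 : A)]

theorem riem_pair_symm (i j k l : ι) : X.riem i j l k = X.riem k l j i := by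
  have h₁ := X.riem_antisymm_right i j k l
  have h₂ := X.riem_antisymm_right j k i l
  have h₃ := X.riem_antisymm_right k l i j
  have h₄ : X.riem i k j l = X.riem k i l j := by
    rw [riem_antisymm_apply, riem_antisymm_right, neg_neg]
  have h₅ := X.riem_antisymm_right l i k j
  have h₆ : X.riem j l k i = X.riem l j i k := by
    rw [riem_antisymm_apply, riem_antisymm_right, neg_neg]
  apply (isUnit_of_invertible (2 : A)).mul_left_cancel
  linear_combination X.riem_cyclic i j k l + X.riem_cyclic j k l i - X.riem_cyclic k l i j
    - X.riem_cyclic l i j k + h₁ - h₂ - h₃ + h₄ + h₅ + h₆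

theorem riem_swap_pairs (i j l k : ι) : X.riem i j l k = X.riem l k i j := by
  rw [riem_pair_symm, riem_antisymm_apply, riem_antisymm_right, neg_neg]

theorem ric_transpose : X.ricᵀ = X.ric := by
  ext j k
  rw [transpose_apply, ← contr_riem, ← contr_riem, ← contr_transpose]
  congr 1
  ext i l
  exact X.riem_swap_pairs _ _ _ _

end Curvature

section Bianchi

theorem cov₃_cov₂_sub (a b : ι) (M : Matrix ι ι A) :
    X.cov₃ a (fun c => X.cov₂ c M) b - X.cov₃ b (fun c => X.cov₂ c M) a =
      -(X.curv a b)ᵀ * M - M * X.curv a b := by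
  have h : ∑ m, X.Γ a m b • X.cov₂ m M = ∑ m, X.Γ b m a • X.cov₂ m M := by
    simp only [X.Γ_symm a _ b]
  rw [cov₃, cov₃, h]
  simp only [cov₂, curv, map_sub, matrixDeriv_mul, matrixDeriv_transpose,
    matrixDeriv_comm (X.D_comm a b) M, transpose_sub, transpose_add, transpose_mul]
  noncomm_ring

theorem covEnd_curv_cyclic (a i j : ι) :
    X.covEnd a (X.curv i j) + X.covEnd i (X.curv j a) + X.covEnd j (X.curv a i) = 0 := by
  simp only [covEnd, curv, map_sub, map_add, matrixDeriv_mul, matrixDeriv_comm (X.D_comm i a),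
    matrixDeriv_comm (X.D_comm j a), matrixDeriv_comm (X.D_comm j i)]
  noncomm_ring

theorem cov₂_riem_cyclic (a i j : ι) :
    X.cov₂ a (X.riem i j) + X.cov₂ i (X.riem j a) + X.cov₂ j (X.riem a i) = 0 := by
  have h (a i j : ι) : X.cov₂ a (X.riem i j) = X.g * X.covEnd a (X.curv i j) := by
    rw [← ginv_mul_riem, covEnd_ginv_mul, g_mul_ginv_mul]
  rw [h, h, h, ← mul_add, ← mul_add, covEnd_curv_cyclic, mul_zero]

theorem cov₄_riem_cyclic (a i j : ι) :
    X.cov₄ a X.riem i j + X.cov₄ i X.riem j a + X.cov₄ j X.riem a i = 0 := by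
  have h (a i j : ι) : ∑ m, X.Γ a m i • X.riem m j = -∑ m, X.Γ i m a • X.riem j m := by
    simp only [X.riem_antisymm _ j, smul_neg, Finset.sum_neg_distrib, X.Γ_symm a _ i]
  rw [← X.cov₂_riem_cyclic a i j]
  simp only [cov₄]
  rw [h a i j, h i j a, h j a i]
  abel

theorem cov₄_riem_antisymm (a i j l k : ι) :
    X.cov₄ a X.riem i j l k = -X.cov₄ a X.riem j i l k := by
  simp only [cov₄_apply, X.riem_antisymm_apply i, X.riem_antisymm_apply _ j, map_neg, mul_neg,
    Finset.sum_neg_distrib]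
  ring

theorem cov₄_riem_antisymm_right (a i j l k : ι) :
    X.cov₄ a X.riem i j l k = -X.cov₄ a X.riem i j k l := by
  simp only [cov₄_apply, X.riem_antisymm_right _ _ l, X.riem_antisymm_right _ _ _ k, map_neg,
    mul_neg, Finset.sum_neg_distrib]
  ring

/-- The covariant derivative `∇_a R_{jk}` of the Ricci tensor. -/
def nablaRic (a : ι) : Matrix ι ι A := X.cov₂ a X.ric

/-- The second covariant derivative `∇_a ∇_b R_{jk}` of the Ricci tensor. -/
def nablaNablaRic (a b : ι) : Matrix ι ι A := X.cov₃ a X.nablaRic b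

theorem contr_cov₄_riem (a j k : ι) :
    X.contr (of fun i l => X.cov₄ a X.riem i j l k) = X.nablaRic a j k := by
  simp only [contr_cov₄, contr_riem]
  rfl

theorem contr_cov₄_riem_middle (a i l : ι) :
    X.contr (of fun j k => X.cov₄ a X.riem j i l k) = -X.nablaRic a i l := by
  rw [← contr_cov₄_riem, ← map_neg]
  congr 1
  ext j k
  exact X.cov₄_riem_antisymm_right _ _ _ _ _

theorem contr_cov₄_riem_left (a i k : ι) :
    X.contr (of fun j l => X.cov₄ a X.riem i j l k) = -X.nablaRic a i k := by
  rw [← contr_cov₄_riem, ← map_neg]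
  congr 1
  ext j l
  exact X.cov₄_riem_antisymm _ _ _ _ _

variable [Invertible (2 : A)]

theorem nablaRic_transpose (a : ι) : (X.nablaRic a)ᵀ = X.nablaRic a := by
  rw [nablaRic, ← cov₂_transpose, ric_transpose]

theorem nablaNablaRic_transpose (a b : ι) :
    (X.nablaNablaRic a b)ᵀ = X.nablaNablaRic a b := by
  simp only [nablaNablaRic, cov₃, transpose_sub, transpose_sum, transpose_smul, ← cov₂_transpose,
    nablaRic_transpose]

theorem nablaRic_symm (a j k : ι) : X.nablaRic a j k = X.nablaRic a k j :=
  congrFun₂ (X.nablaRic_transpose a) k j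

theorem contr_nablaRic (a : ι) :
    X.contr (X.nablaRic a) = 2 * X.contr (of fun j k => X.nablaRic j k a) := by
  have hdiv : X.contr (of fun j k => X.contr (of fun i l => X.cov₄ i X.riem j a l k)) =
      -X.contr (of fun i l => X.nablaRic i l a) := by
    rw [← map_neg, X.contr_contr_comm fun j k => of fun i l => X.cov₄ i X.riem j a l k]
    congr 1
    ext i l
    rw [of_apply, Matrix.neg_apply, of_apply, nablaRic_symm, ← contr_cov₄_riem_middle]
    rfl
  have hcyc : X.nablaRic a = (of fun j k => X.nablaRic j k a)
      - of fun j k => X.contr (of fun i l => X.cov₄ i X.riem j a l k) := by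
    ext j k
    have h := congrArg X.contr (show (of fun i l => X.cov₄ a X.riem i j l k)
        + (of fun i l => X.cov₄ i X.riem j a l k) + (of fun i l => X.cov₄ j X.riem a i l k) = 0 by
      ext i l
      exact congrFun₂ (X.cov₄_riem_cyclic a i j) l k)
    rw [map_add, map_add, contr_cov₄_riem, contr_cov₄_riem_left, map_zero] at h
    rw [Matrix.sub_apply, of_apply, of_apply, X.nablaRic_symm j k a]
    linear_combination h
  rw [hcyc, map_sub, hdiv]
  ring

end Bianchi

section SecondDerivativesOfRicci

/-- The scalar curvature. -/
def scal : A := X.contr X.ric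

/-- The rough Laplacian `ΔR_{jk} = g^{pl} ∇_p ∇_l R_{jk}` of the Ricci tensor. -/
def lapRic : Matrix ι ι A := of fun j k => X.contr (of fun p l => X.nablaNablaRic p l j k)

/-- The curvature term `R^q_{pjk} R^p_q`. -/
def riemRic : Matrix ι ι A := of fun j k => ∑ p, (X.ricUp * X.curv p j) p k

theorem nablaNablaRic_apply (a b j k : ι) : X.nablaNablaRic a b j k =
    X.D a (X.nablaRic b j k) - ∑ p, X.Γ a p j * X.nablaRic b p k
      - ∑ p, X.Γ a p k * X.nablaRic b j p - ∑ m, X.Γ a m b * X.nablaRic m j k :=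
  X.cov₃_apply a _ b j k

theorem nablaNablaRic_sub_swap (a b : ι) : X.nablaNablaRic a b - X.nablaNablaRic b a =
    -(X.curv a b)ᵀ * X.ric - X.ric * X.curv a b :=
  X.cov₃_cov₂_sub a b X.ric

theorem contr_nablaRic_eq_D_scal (a : ι) : X.contr (X.nablaRic a) = X.D a X.scal :=
  X.contr_cov₂ a X.ric

theorem contr_nablaNablaRic_symm (j k : ι) :
    X.contr (X.nablaNablaRic j k) = X.contr (X.nablaNablaRic k j) := by
  simp only [nablaNablaRic, contr_cov₃, contr_nablaRic_eq_D_scal, cov₁, X.D_comm j k,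
    X.Γ_symm j _ k]

theorem contr_nablaNablaRic_comm (j k : ι) :
    X.contr (of fun p l => X.nablaNablaRic p j l k) =
      X.contr (of fun p l => X.nablaNablaRic j p l k) + (X.ric * X.ricUp) j k
        - X.riemRic j k := by
  have hcomm : (of fun p l => X.nablaNablaRic p j l k) = (of fun p l => X.nablaNablaRic j p l k)
      - (of fun p l => ((X.curv p j)ᵀ * X.ric) l k) - of fun p l => (X.ric * X.curv p j) l k := by
    ext p l
    have h := congrFun₂ (X.nablaNablaRic_sub_swap p j) l k
    simp only [neg_mul, Matrix.sub_apply, Matrix.neg_apply, of_apply] at h ⊢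
    linear_combination h
  have htrans (p : ι) : X.ginv * ((X.curv p j)ᵀ * X.ric) = -(X.curv p j * X.ricUp) := by
    have h : (X.curv p j)ᵀ * X.g = -(X.g * X.curv p j) := by
      rw [← riem, ← riem_transpose, riem, transpose_mul, X.g_transpose]
    rw [← X.g_mul_ginv_mul X.ric, ← mul_assoc (X.curv p j)ᵀ, h, neg_mul, mul_assoc, mul_neg,
      ginv_mul_g_mul, ricUp]
  have hsum : ∑ p, (X.curv p j * X.ricUp) p k = (X.ric * X.ricUp) j k := by
    simp only [mul_apply, ric_apply, Finset.sum_mul]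
    exact Finset.sum_comm
  have hriem : ∑ p, (X.ginv * (X.ric * X.curv p j)) p k = X.riemRic j k := by
    simp only [← mul_assoc]
    rfl
  rw [hcomm, map_sub, map_sub, X.contr_of_column fun p => (X.curv p j)ᵀ * X.ric,
    X.contr_of_column fun p => X.ric * X.curv p j, hriem]
  simp only [htrans, Matrix.neg_apply, Finset.sum_neg_distrib, hsum, sub_neg_eq_add]

variable [Invertible (2 : A)]

theorem nablaNablaRic_symm (a b j k : ι) :
    X.nablaNablaRic a b j k = X.nablaNablaRic a b k j :=
  congrFun₂ (X.nablaNablaRic_transpose a b) k j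

theorem contr_nablaNablaRic (j k : ι) : X.contr (X.nablaNablaRic j k) =
    2 * X.contr (of fun p l => X.nablaNablaRic j p l k) := by
  have h2 : X.D j 2 = 0 := (X.D j).map_natCast 2
  simp only [nablaNablaRic, contr_cov₃, contr_cov₃_left, contr_nablaRic, cov₁, Derivation.leibniz,
    h2, smul_eq_mul, mul_sub, Finset.mul_sum, mul_left_comm, mul_zero, add_zero]

theorem riemRic_transpose : X.riemRicᵀ = X.riemRic := by
  have h (j k : ι) : X.riemRic j k = ∑ p, ∑ q, (X.ricUp * X.ginv) p q * X.riem p j q k := by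
    simp only [riemRic, of_apply, ← ginv_mul_riem, ← mul_assoc]
    simp only [mul_apply]
  have hsymm (p q : ι) : (X.ricUp * X.ginv) p q = (X.ricUp * X.ginv) q p := by
    rw [← transpose_apply (X.ricUp * X.ginv) p q, ricUp, transpose_mul, transpose_mul,
      X.ginv_transpose, ric_transpose, mul_assoc]
  ext j k
  rw [transpose_apply, h, h, Finset.sum_comm]
  simp only [X.riem_swap_pairs _ j _ k, hsymm]

end SecondDerivativesOfRicci

section Variation

variable {d : Derivation R A A}

theorem g_mul_matrixDeriv_Γ_add_transpose (hd : ∀ i a, d (X.D i a) = X.D i (d a)) (i : ι) :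
    X.g * matrixDeriv d (X.Γ i) + (X.g * matrixDeriv d (X.Γ i))ᵀ =
      X.cov₂ i (matrixDeriv d X.g) := by
  have h := matrixDeriv_comm (hd i) X.g
  rw [X.D_g, map_add, matrixDeriv_mul, matrixDeriv_mul, matrixDeriv_transpose] at h
  rw [cov₂, ← h, transpose_mul, X.g_transpose]
  abel

/-- Koszul's trick, with `g_mul_matrixDeriv_Γ_add_transpose` in the role of metric compatibility and
the symmetry of the variation of `Γ` in that of vanishing torsion. -/
theorem two_mul_g_mul_matrixDeriv_Γ (hd : ∀ i a, d (X.D i a) = X.D i (d a)) (j k l : ι) :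
    2 * (X.g * matrixDeriv d (X.Γ j)) l k = X.cov₂ j (matrixDeriv d X.g) l k
      + X.cov₂ k (matrixDeriv d X.g) l j - X.cov₂ l (matrixDeriv d X.g) j k := by
  have hsymm (j l k : ι) :
      (X.g * matrixDeriv d (X.Γ j)) l k = (X.g * matrixDeriv d (X.Γ k)) l j := by
    simp only [mul_apply, matrixDeriv_apply, X.Γ_symm j]
  simp only [← X.g_mul_matrixDeriv_Γ_add_transpose hd, Matrix.add_apply, transpose_apply]
  rw [hsymm k l j, hsymm j k l, hsymm k j l]
  ring

theorem matrixDeriv_curv (hd : ∀ i a, d (X.D i a) = X.D i (d a)) (i j : ι) :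
    matrixDeriv d (X.curv i j) =
      X.covEnd i (matrixDeriv d (X.Γ j)) - X.covEnd j (matrixDeriv d (X.Γ i)) := by
  simp only [curv, covEnd, map_sub, map_add, matrixDeriv_mul, matrixDeriv_comm (hd _)]
  abel

theorem matrixDeriv_ric (hd : ∀ i a, d (X.D i a) = X.D i (d a)) (j k : ι) :
    matrixDeriv d X.ric j k =
      X.contr (of fun p l => (X.cov₃ p (fun i => X.g * matrixDeriv d (X.Γ i)) j
        - X.cov₃ j (fun i => X.g * matrixDeriv d (X.Γ i)) p) l k) := by
  have hcov (i j : ι) : X.covEnd i (matrixDeriv d (X.Γ j)) =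
      X.ginv * X.cov₂ i (X.g * matrixDeriv d (X.Γ j)) := by
    rw [← covEnd_ginv_mul, ginv_mul_g_mul]
  rw [X.contr_of_column fun p => X.cov₃ p (fun i => X.g * matrixDeriv d (X.Γ i)) j
    - X.cov₃ j (fun i => X.g * matrixDeriv d (X.Γ i)) p, matrixDeriv_apply, ric_apply, map_sum]
  refine Finset.sum_congr rfl fun p _ => ?_
  rw [← matrixDeriv_apply, X.matrixDeriv_curv hd, hcov, hcov, ← mul_sub]
  simp only [cov₃, X.Γ_symm j _ p, sub_sub_sub_cancel_right]

end Variation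

section Laplacian

/-- The rough Laplacian of a (1,1)-tensor. -/
def lapEnd (M : Matrix ι ι A) : Matrix ι ι A :=
  ∑ p, ∑ q, X.ginv p q • (X.covEnd p (X.covEnd q M) - ∑ m, X.Γ p m q • X.covEnd m M)

theorem lapEnd_ricUp : X.lapEnd X.ricUp = X.ginv * X.lapRic := by
  have hlap : X.lapRic = ∑ p, ∑ q, X.ginv p q • X.nablaNablaRic p q := by
    ext j k
    simp only [lapRic, contr_apply, of_apply, Matrix.sum_apply, Matrix.smul_apply, smul_eq_mul]
  simp only [hlap, lapEnd, ricUp, covEnd_ginv_mul, nablaNablaRic, nablaRic, cov₃, Finset.mul_sum,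
    mul_smul_comm, mul_sub]

end Laplacian

section RicciFlow

/-! ### Evolution equations under the Ricci flow -/

variable {X} {d : Derivation R A A}

/-- The Ricci flow in algebraic form: `d` is a time derivative, commuting with the frame, along
which the metric evolves by `-2 Ric`. -/
structure IsRicciFlow (X : LeviCivitaFrame R A ι) (d : Derivation R A A) : Prop where
  comm : ∀ i a, d (X.D i a) = X.D i (d a)
  matrixDeriv_g : matrixDeriv d X.g = (-2 : ℤ) • X.ric

namespace IsRicciFlow

variable [Invertible (2 : A)]

theorem g_mul_matrixDeriv_Γ (hX : X.IsRicciFlow d) (j l k : ι) :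
    (X.g * matrixDeriv d (X.Γ j)) l k =
      -X.nablaRic j l k - X.nablaRic k l j + X.nablaRic l j k := by
  apply (isUnit_of_invertible (2 : A)).mul_left_cancel
  rw [two_mul_g_mul_matrixDeriv_Γ X hX.comm, hX.matrixDeriv_g]
  simp only [cov₂_zsmul, Matrix.smul_apply, nablaRic]
  simp only [zsmul_eq_mul, Int.cast_neg, Int.cast_ofNat]
  ring

theorem deriv_Γ (hX : X.IsRicciFlow d) (j l k : ι) : d (X.Γ j l k) =
    -X.covEnd j X.ricUp l k - X.covEnd k X.ricUp l j + ∑ m, X.ginv l m * X.nablaRic m j k := by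
  rw [← matrixDeriv_apply, ← X.ginv_mul_g_mul (matrixDeriv d (X.Γ j)), mul_apply]
  simp only [hX.g_mul_matrixDeriv_Γ, mul_add, mul_sub, mul_neg, Finset.sum_add_distrib,
    Finset.sum_sub_distrib, Finset.sum_neg_distrib]
  simp only [ricUp, covEnd_ginv_mul, mul_apply]
  rfl

theorem cov₃_g_mul_matrixDeriv_Γ (hX : X.IsRicciFlow d) (p j l k : ι) :
    X.cov₃ p (fun i => X.g * matrixDeriv d (X.Γ i)) j l k =
      -X.nablaNablaRic p j l k - X.nablaNablaRic p k l j + X.nablaNablaRic p l j k := by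
  simp only [cov₃_apply, nablaNablaRic_apply, hX.g_mul_matrixDeriv_Γ, map_add,
    map_sub, map_neg, mul_add, mul_sub, mul_neg, Finset.sum_add_distrib, Finset.sum_sub_distrib,
    Finset.sum_neg_distrib]
  ring

theorem matrixDeriv_ric (hX : X.IsRicciFlow d) : matrixDeriv d X.ric =
    X.lapRic - (2 : ℤ) • (X.ric * X.ricUp) + (2 : ℤ) • X.riemRic := by
  ext j k
  have hvar : (of fun p l => (X.cov₃ p (fun i => X.g * matrixDeriv d (X.Γ i)) j
        - X.cov₃ j (fun i => X.g * matrixDeriv d (X.Γ i)) p) l k) =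
      (of fun p l => X.nablaNablaRic p l j k) - (of fun p l => X.nablaNablaRic p j l k)
        - (of fun p l => X.nablaNablaRic p k l j) + X.nablaNablaRic j k
        + (of fun p l => X.nablaNablaRic j p l k) - (of fun p l => X.nablaNablaRic j p l k)ᵀ := by
    ext p l
    simp only [Matrix.sub_apply, Matrix.add_apply, of_apply, transpose_apply,
      hX.cov₃_g_mul_matrixDeriv_Γ, X.nablaNablaRic_symm j l p k, X.nablaNablaRic_symm j k l p]
    ring
  have hsymm : X.contr (of fun p l => X.nablaNablaRic k p l j) =
      X.contr (of fun p l => X.nablaNablaRic j p l k) :=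
    (isUnit_of_invertible (2 : A)).mul_left_cancel <| by
      rw [← X.contr_nablaNablaRic, X.contr_nablaNablaRic_symm, X.contr_nablaNablaRic]
  have hsq : (X.ric * X.ricUp) k j = (X.ric * X.ricUp) j k := by
    rw [← transpose_apply (X.ric * X.ricUp), ricUp, transpose_mul, transpose_mul,
      X.ginv_transpose, X.ric_transpose, mul_assoc]
  have hriem : X.riemRic k j = X.riemRic j k := congrFun₂ X.riemRic_transpose j k
  have hlap : X.contr (of fun p l => X.nablaNablaRic p l j k) = X.lapRic j k := rfl
  rw [X.matrixDeriv_ric hX.comm, hvar]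
  simp only [map_add, map_sub, contr_transpose, add_sub_cancel_right, hlap,
    X.contr_nablaNablaRic, X.contr_nablaNablaRic_comm j, X.contr_nablaNablaRic_comm k, hsymm, hsq,
    hriem, Matrix.add_apply, Matrix.sub_apply, two_zsmul]
  ring

theorem matrixDeriv_ricUp (hX : X.IsRicciFlow d) : matrixDeriv d X.ricUp =
    X.lapEnd X.ricUp + (2 : ℤ) • (X.ginv * X.riemRic) := by
  have hginv : matrixDeriv d X.ginv * X.ric = (2 : ℤ) • (X.ginv * (X.ric * X.ricUp)) := by
    rw [matrixDeriv_of_mul_eq_one _ X.g_mul_ginv, hX.matrixDeriv_g, ricUp]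
    noncomm_ring
  rw [ricUp, matrixDeriv_mul, hginv, hX.matrixDeriv_ric, ← ricUp,
    lapEnd_ricUp, mul_add, mul_sub, mul_smul_comm, mul_smul_comm]
  abel

end IsRicciFlow

end RicciFlow

end LeviCivitaFrame

section OfMetric

open Matrix

variable {R A ι : Type*} [CommSemiring R] [CommRing A] [Algebra R A] [Fintype ι] [DecidableEq ι]
  [Invertible (2 : A)]

/-- The Christoffel symbols `Γ^l_{ij}` of a metric in the frame `D`, as the matrices
`christoffel D g ginv i l j`. -/
def christoffel (D : ι → Derivation R A A) (g ginv : Matrix ι ι A) (i : ι) : Matrix ι ι A :=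
  ⅟(2 : A) • (ginv * of fun l j => D i (g j l) + D j (g i l) - D l (g i j))

/-- A metric in a commuting frame with its Levi-Civita connection. -/
def LeviCivitaFrame.ofMetric (D : ι → Derivation R A A)
    (D_comm : ∀ i j a, D i (D j a) = D j (D i a)) (g ginv : Matrix ι ι A) (g_transpose : gᵀ = g)
    (g_mul_ginv : g * ginv = 1) : LeviCivitaFrame R A ι where
  D := D
  D_comm := D_comm
  g := g
  ginv := ginv
  g_transpose := g_transpose
  g_mul_ginv := g_mul_ginv
  Γ := christoffel D g ginv
  Γ_symm i l k := by
    have hg : g i k = g k i := congrFun₂ g_transpose k i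
    simp only [christoffel, Matrix.smul_apply, mul_apply, of_apply, hg, add_comm (D i _)]
  D_g i := by
    have hg (a b : ι) : g a b = g b a := congrFun₂ g_transpose b a
    have hmul : g * christoffel D g ginv i =
        ⅟(2 : A) • of fun l j => D i (g j l) + D j (g i l) - D l (g i j) := by
      rw [christoffel, mul_smul_comm, ← mul_assoc, g_mul_ginv, one_mul]
    have htrans : (christoffel D g ginv i)ᵀ * g = (g * christoffel D g ginv i)ᵀ := by
      rw [transpose_mul, g_transpose]
    rw [htrans, hmul]
    ext l j
    simp only [matrixDeriv_apply, Matrix.add_apply, transpose_apply, Matrix.smul_apply, of_apply,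
      smul_eq_mul, ← mul_add, hg j l]
    rw [← (isUnit_of_invertible (2 : A)).mul_right_inj, mul_invOf_cancel_left]
    ring

end OfMetric

section SmoothFunctions

/-! ### The algebra of smooth functions on an open set -/

open Matrix
open scoped ContDiff Topology

theorem extend_subtypeVal {V : Type*} {U : Set V} (f : U → ℝ) {p : V} (hp : p ∈ U) :
    Function.extend Subtype.val f 0 p = f ⟨p, hp⟩ :=
  Subtype.val_injective.extend_apply f 0 ⟨p, hp⟩

variable {V : Type*} [NormedAddCommGroup V] [NormedSpace ℝ V]

theorem contDiffOn_matrix_det {ι : Type*} [Fintype ι] [DecidableEq ι] {U : Set V} {k : ℕ∞ω}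
    {M : V → Matrix ι ι ℝ} (hM : ∀ i j, ContDiffOn ℝ k (fun p => M p i j) U) :
    ContDiffOn ℝ k (fun p => (M p).det) U := by
  simp only [det_apply]
  exact ContDiffOn.sum fun σ _ => (contDiffOn_prod fun i _ => hM (σ i) i).const_smul _

theorem contDiffOn_of_matrix_mul_eq_one {ι : Type*} [Fintype ι] [DecidableEq ι] {U : Set V}
    {k : ℕ∞ω} {M N : V → Matrix ι ι ℝ} (hM : ∀ i j, ContDiffOn ℝ k (fun p => M p i j) U)
    (hMN : ∀ p ∈ U, M p * N p = 1) (i j : ι) : ContDiffOn ℝ k (fun p => N p i j) U := by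
  have hdet (p : V) (hp : p ∈ U) : (M p).det ≠ 0 := det_ne_zero_of_right_inverse (hMN p hp)
  have hadj : ContDiffOn ℝ k (fun p => (M p).adjugate i j) U := by
    simp only [adjugate_apply]
    refine contDiffOn_matrix_det fun a b => ?_
    by_cases ha : a = j
    · subst ha
      simpa only [updateRow_self] using contDiffOn_const
    · simpa only [updateRow_ne ha] using hM a b
  refine (((contDiffOn_matrix_det hM).inv hdet).mul hadj).congr fun p hp => ?_
  rw [← inv_eq_right_inv (hMN p hp), inv_def, Ring.inverse_eq_inv', Matrix.smul_apply, smul_eq_mul]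
  rfl

/-- The algebra of smooth real functions on `U`, encoded as functions on the subtype whose extension
by zero is smooth on `U`. -/
def smoothFunctions (U : Set V) : Subalgebra ℝ (U → ℝ) where
  carrier := {f | ContDiffOn ℝ ∞ (Function.extend Subtype.val f 0) U}
  mul_mem' ha hb := (ContDiffOn.mul ha hb).congr fun p hp => by simp [extend_subtypeVal _ hp]
  add_mem' ha hb := (ContDiffOn.add ha hb).congr fun p hp => by simp [extend_subtypeVal _ hp]
  algebraMap_mem' r := (contDiffOn_const (c := r)).congr fun p hp => by
    simp [extend_subtypeVal _ hp]

namespace smoothFunctions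

variable {U : Set V}

instance : Invertible (2 : smoothFunctions U) :=
  (Invertible.map (algebraMap ℝ (smoothFunctions U)) 2).copy 2 (map_ofNat _ 2).symm

/-- Evaluation at a point. -/
def eval (p : U) : smoothFunctions U →ₐ[ℝ] ℝ :=
  (Pi.evalAlgHom ℝ (fun _ : U => ℝ) p).comp (smoothFunctions U).val

theorem eval_ext {a b : smoothFunctions U} (h : ∀ p, eval p a = eval p b) : a = b :=
  Subtype.ext (funext h)

theorem eval_invOf_two (p : U) : eval p ⅟2 = 1 / 2 := by
  have h := congrArg (eval p) (invOf_mul_self (2 : smoothFunctions U))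
  rw [map_mul, map_ofNat, map_one] at h
  linarith

/-- The restriction to `U` of a function that is smooth on `U`. -/
def restrict (F : V → ℝ) (hF : ContDiffOn ℝ ∞ F U) : smoothFunctions U :=
  ⟨fun p => F p, hF.congr fun _ hp => extend_subtypeVal _ hp⟩

/-- `F` agrees on `U` with the smooth function `a`. -/
def Represents (F : V → ℝ) (a : smoothFunctions U) : Prop :=
  ∀ p : U, F p = eval p a

theorem represents_extend (a : smoothFunctions U) :
    Represents (Function.extend Subtype.val a.1 0) a :=
  fun p => extend_subtypeVal _ p.2

theorem Represents.eventuallyEq (hU : IsOpen U) {F : V → ℝ} {a : smoothFunctions U}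
    (h : Represents F a) (p : U) : F =ᶠ[𝓝 (p : V)] Function.extend Subtype.val a.1 0 := by
  filter_upwards [hU.mem_nhds p.2] with q hq
  rw [h ⟨q, hq⟩, represents_extend a ⟨q, hq⟩]

theorem Represents.contDiffAt (hU : IsOpen U) {F : V → ℝ} {a : smoothFunctions U}
    (h : Represents F a) (p : U) : ContDiffAt ℝ ∞ F p :=
  (a.2.contDiffAt (hU.mem_nhds p.2)).congr_of_eventuallyEq (h.eventuallyEq hU p)

theorem Represents.differentiableAt (hU : IsOpen U) {F : V → ℝ} {a : smoothFunctions U}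
    (h : Represents F a) (p : U) : DifferentiableAt ℝ F p :=
  (h.contDiffAt hU p).differentiableAt (by simp)

/-- The directional derivative of a smooth function, again a smooth function. -/
def fderivApply (hU : IsOpen U) (v : V) (a : smoothFunctions U) : smoothFunctions U :=
  restrict (fun p => fderiv ℝ (Function.extend Subtype.val a.1 0) p v)
    ((ContDiffOn.fderiv_of_isOpen a.2 hU (by simp)).clm_apply contDiffOn_const)

theorem Represents.eval_fderivApply (hU : IsOpen U) {F : V → ℝ} {a : smoothFunctions U}
    (h : Represents F a) (v : V) (p : U) :
    eval p (fderivApply hU v a) = fderiv ℝ F p v := by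
  rw [(h.eventuallyEq hU p).fderiv_eq]
  rfl

/-- The directional derivative along `v`, as a derivation of the algebra of smooth functions. -/
def dirDeriv (hU : IsOpen U) (v : V) : Derivation ℝ (smoothFunctions U) (smoothFunctions U) :=
  Derivation.mk'
    { toFun := fderivApply hU v
      map_add' a b := eval_ext fun p => by
        have h : Represents (Function.extend Subtype.val a.1 0 + Function.extend Subtype.val b.1 0)
            (a + b) := fun p => congrArg₂ (· + ·) (represents_extend a p) (represents_extend b p)
        rw [h.eval_fderivApply hU v p, fderiv_add ((represents_extend a).differentiableAt hU p)
          ((represents_extend b).differentiableAt hU p)]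
        rfl
      map_smul' c a := eval_ext fun p => by
        have h : Represents (c • Function.extend Subtype.val a.1 0) (c • a) :=
          fun p => congrArg (c * ·) (represents_extend a p)
        rw [h.eval_fderivApply hU v p,
          fderiv_const_smul ((represents_extend a).differentiableAt hU p)]
        rfl }
    fun a b => eval_ext fun p => by
      have h : Represents (Function.extend Subtype.val a.1 0 * Function.extend Subtype.val b.1 0)
          (a * b) := fun p => congrArg₂ (· * ·) (represents_extend a p) (represents_extend b p)
      change eval p (fderivApply hU v (a * b)) = _
      rw [h.eval_fderivApply hU v p, fderiv_mul ((represents_extend a).differentiableAt hU p)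
        ((represents_extend b).differentiableAt hU p), represents_extend a p, represents_extend b p]
      rfl

theorem Represents.dirDeriv (hU : IsOpen U) {F : V → ℝ} {a : smoothFunctions U}
    (h : Represents F a) (v : V) : Represents (fun p => fderiv ℝ F p v) (dirDeriv hU v a) :=
  fun p => (h.eval_fderivApply hU v p).symm

theorem dirDeriv_comm (hU : IsOpen U) (v w : V) (a : smoothFunctions U) :
    dirDeriv hU v (dirDeriv hU w a) = dirDeriv hU w (dirDeriv hU v a) := eval_ext fun p => by
  set F := Function.extend Subtype.val a.1 0
  have hF : ContDiffAt ℝ ∞ F p := (represents_extend a).contDiffAt hU p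
  have hF' : DifferentiableAt ℝ (fderiv ℝ F) p :=
    (hF.fderiv_right (m := 1) (by norm_cast)).differentiableAt one_ne_zero
  have hsnd (v w : V) : eval p (dirDeriv hU v (dirDeriv hU w a)) =
      fderiv ℝ (fderiv ℝ F) p v w := by
    change eval p (fderivApply hU v (dirDeriv hU w a)) = _
    rw [((represents_extend a).dirDeriv hU w).eval_fderivApply hU v p,
      fderiv_clm_apply hF' (differentiableAt_const w)]
    simp
  rw [hsnd, hsnd]
  exact hF.isSymmSndFDerivAt (by simpa using ENat.LEInfty.out) v w

end smoothFunctions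

end SmoothFunctions

namespace CC

/-! ### Smooth fields on an open subset of space-time -/

open scoped ContDiff Topology
open Matrix smoothFunctions LeviCivitaFrame

variable {n : ℕ}

theorem spd_eq_fderiv {u : Fld n} {x : Fin n → ℝ} {t : ℝ}
    (hu : DifferentiableAt ℝ (Function.uncurry u) (x, t)) (i : Fin n) :
    spd i u x t = fderiv ℝ (Function.uncurry u) (x, t) (Pi.single i 1, 0) := by
  have h := hu.hasFDerivAt.comp x (hasFDerivAt_prodMk_left (𝕜 := ℝ) x t)
  exact (DFunLike.congr_fun h.fderiv _).trans (by simp)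

theorem hasDerivAt_time {u : Fld n} {x : Fin n → ℝ} {t : ℝ}
    (hu : DifferentiableAt ℝ (Function.uncurry u) (x, t)) :
    HasDerivAt (fun s => u x s) (fderiv ℝ (Function.uncurry u) (x, t) (0, 1)) t := by
  have h := hu.hasFDerivAt.comp t (hasFDerivAt_prodMk_right (𝕜 := ℝ) x t)
  exact h.hasDerivAt.congr_deriv (by simp)

variable {W : Set ((Fin n → ℝ) × ℝ)}

theorem represents_spd (hW : IsOpen W) {u : Fld n} {a : smoothFunctions W}
    (h : Represents (Function.uncurry u) a) (i : Fin n) :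
    Represents (Function.uncurry (spd i u)) (dirDeriv hW (Pi.single i 1, 0) a) := fun p =>
  (spd_eq_fderiv (h.differentiableAt hW p) i).trans (h.dirDeriv hW _ p)

theorem represents_tpd (hW : IsOpen W) {u : Fld n} {a : smoothFunctions W}
    (h : Represents (Function.uncurry u) a) :
    Represents (Function.uncurry (tpd u)) (dirDeriv hW (0, 1) a) := fun p =>
  (hasDerivAt_time (h.differentiableAt hW p)).deriv.trans (h.dirDeriv hW _ p)

/-- A smooth solution of the Ricci flow on an open subset `W` of space-time, for a family of
symmetric nondegenerate (not necessarily definite) metrics. -/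
structure PseudoRicciFlow (W : Set ((Fin n → ℝ) × ℝ)) (g ginv : Met n) : Prop where
  isOpen : IsOpen W
  contDiffOn : ∀ i j, ContDiffOn ℝ ∞ (Function.uncurry (g i j)) W
  symm : ∀ x t, (x, t) ∈ W → ∀ i j, g i j x t = g j i x t
  mul_inv : ∀ x t, (x, t) ∈ W → ∀ i j, ∑ k, g i k x t * ginv k j x t = if i = j then 1 else 0
  flow : ∀ x t, (x, t) ∈ W → ∀ i j, tpd (g i j) x t = -2 * Ric g ginv i j x t

theorem RicciFlow.pseudoRicciFlow {Ωs : Set (Fin n → ℝ)} {T : ℝ} {g ginv : Met n}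
    (hg : RicciFlow Ωs T g ginv) : PseudoRicciFlow (Ωs ×ˢ Set.Ioo 0 T) g ginv := by
  obtain ⟨hΩ, -, -, hsmooth, hpt⟩ := hg
  have hpt' (x : Fin n → ℝ) (t : ℝ) (h : (x, t) ∈ Ωs ×ˢ Set.Ioo 0 T) :=
    hpt x h.1 t (Set.Ioo_subset_Ico_self h.2)
  exact
    { isOpen := hΩ.prod isOpen_Ioo
      contDiffOn := fun i j => (hsmooth i j).mono (Set.prod_mono_right Set.Ioo_subset_Ico_self)
      symm := fun x t h => (hpt' x t h).1
      mul_inv := fun x t h => (hpt' x t h).2.2.1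
      flow := fun x t h => (hpt' x t h).2.2.2 }

namespace PseudoRicciFlow

variable {g ginv : Met n} (hg : PseudoRicciFlow W g ginv)
include hg

theorem matrix_mul_inv {p : (Fin n → ℝ) × ℝ} (hp : p ∈ W) :
    (of fun i j => g i j p.1 p.2) * (of fun i j => ginv i j p.1 p.2) = 1 := by
  ext i j
  rw [mul_apply, one_apply]
  exact hg.mul_inv p.1 p.2 hp i j

theorem contDiffOn_ginv (i j : Fin n) : ContDiffOn ℝ ∞ (Function.uncurry (ginv i j)) W :=
  contDiffOn_of_matrix_mul_eq_one hg.contDiffOn (fun _ => hg.matrix_mul_inv) i j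

/-- The Levi-Civita frame of the spatial metric, over the smooth functions on `W`. -/
def frame : LeviCivitaFrame ℝ (smoothFunctions W) (Fin n) :=
  .ofMetric (fun i => dirDeriv hg.isOpen (Pi.single i 1, 0))
    (fun _ _ => dirDeriv_comm hg.isOpen _ _)
    (of fun i j => restrict (Function.uncurry (g i j)) (hg.contDiffOn i j))
    (of fun i j => restrict (Function.uncurry (ginv i j)) (hg.contDiffOn_ginv i j))
    (by
      ext i j : 2
      exact funext fun p => hg.symm _ _ p.2 j i)
    (by
      ext i j : 1
      refine eval_ext fun p => ?_
      rw [mul_apply, one_apply, map_sum, apply_ite (eval p), map_one, map_zero]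
      exact hg.mul_inv _ _ p.2 i j)

theorem represents_g (i j : Fin n) : Represents (Function.uncurry (g i j)) (hg.frame.g i j) :=
  fun _ => rfl

theorem represents_ginv (i j : Fin n) :
    Represents (Function.uncurry (ginv i j)) (hg.frame.ginv i j) :=
  fun _ => rfl

theorem represents_frame_spd {u : Fld n} {a : smoothFunctions W}
    (h : Represents (Function.uncurry u) a) (i : Fin n) :
    Represents (Function.uncurry (spd i u)) (hg.frame.D i a) :=
  represents_spd hg.isOpen h i

theorem represents_Gamma (k i j : Fin n) :
    Represents (Function.uncurry (Gamma g ginv k i j)) (hg.frame.Γ i k j) := fun p => by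
  have hΓ : hg.frame.Γ i k j = ⅟2 * ∑ l, hg.frame.ginv k l * (hg.frame.D i (hg.frame.g j l)
    + hg.frame.D j (hg.frame.g i l) - hg.frame.D l (hg.frame.g i j)) := rfl
  rw [hΓ]
  simp only [map_mul, map_sum, map_add, map_sub, eval_invOf_two, ← hg.represents_ginv _ _ p,
    ← hg.represents_frame_spd (hg.represents_g _ _) _ p]
  rfl

theorem represents_Riem (l i j k : Fin n) :
    Represents (Function.uncurry (Riem g ginv l i j k)) (hg.frame.curv i j l k) := fun p => by
  simp only [curv, Matrix.add_apply, Matrix.sub_apply, matrixDeriv_apply, mul_apply, map_add,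
    map_sub, map_sum, map_mul, ← hg.represents_Gamma _ _ _ p,
    ← hg.represents_frame_spd (hg.represents_Gamma _ _ _) _ p]
  simp only [Function.uncurry, Riem, Finset.sum_sub_distrib, mul_comm]
  ring

theorem represents_Ric (j k : Fin n) :
    Represents (Function.uncurry (Ric g ginv j k)) (hg.frame.ric j k) := fun p => by
  simp only [ric_apply, map_sum, ← hg.represents_Riem _ _ _ _ p]
  rfl

theorem represents_RicUp (l k : Fin n) :
    Represents (Function.uncurry (RicUp g ginv l k)) (hg.frame.ricUp l k) := fun p => by
  have hsymm (m : Fin n) : hg.frame.ric m k = hg.frame.ric k m :=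
    congrFun₂ hg.frame.ric_transpose k m
  simp only [ricUp, mul_apply, hsymm, map_sum, map_mul, ← hg.represents_ginv _ _ p,
    ← hg.represents_Ric _ _ p]
  rfl

theorem represents_Scal : Represents (Function.uncurry (Scal g ginv)) hg.frame.scal := fun p => by
  simp only [scal, contr_apply, map_sum, map_mul, ← hg.represents_ginv _ _ p,
    ← hg.represents_Ric _ _ p]
  rfl

theorem represents_cd2_Ric (a j k : Fin n) :
    Represents (Function.uncurry (cd2 g ginv a (Ric g ginv) j k)) (hg.frame.nablaRic a j k) :=
  fun p => by
  simp only [nablaRic, cov₂_apply, map_sum (eval p), map_mul, map_sub,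
    ← hg.represents_Gamma _ _ _ p, ← hg.represents_Ric _ _ p,
    ← hg.represents_frame_spd (hg.represents_Ric _ _) _ p]
  rfl

theorem represents_cd11 {u : Fin n → Fin n → Fld n}
    {M : Matrix (Fin n) (Fin n) (smoothFunctions W)}
    (h : ∀ l j, Represents (Function.uncurry (u l j)) (M l j)) (a l j : Fin n) :
    Represents (Function.uncurry (cd11 g ginv a u l j)) (hg.frame.covEnd a M l j) := fun p => by
  simp only [covEnd, Matrix.add_apply, Matrix.sub_apply, matrixDeriv_apply, mul_apply,
    map_sum (eval p), map_mul, map_sub, map_add, ← hg.represents_Gamma _ _ _ p,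
    ← h _ _ p, ← hg.represents_frame_spd (h _ _) _ p]
  simp only [Function.uncurry, cd11, mul_comm]

theorem represents_lap11 {u : Fin n → Fin n → Fld n}
    {M : Matrix (Fin n) (Fin n) (smoothFunctions W)}
    (h : ∀ l j, Represents (Function.uncurry (u l j)) (M l j)) (l i : Fin n) :
    Represents (Function.uncurry (lap11 g ginv u l i)) (hg.frame.lapEnd M l i) := fun p => by
  have hcd (q : Fin n) (l j : Fin n) := hg.represents_cd11 h q l j
  have hcov (a q : Fin n) : hg.frame.covEnd a (hg.frame.covEnd q M) l i =
      hg.frame.D a (hg.frame.covEnd q M l i)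
        + ∑ m, hg.frame.Γ a l m * hg.frame.covEnd q M m i
        - ∑ m, hg.frame.Γ a m i * hg.frame.covEnd q M l m := by
    rw [covEnd, Matrix.sub_apply, Matrix.add_apply, matrixDeriv_apply, mul_apply, mul_apply]
    simp only [mul_comm]
  simp only [lapEnd, hcov, Matrix.sum_apply, Matrix.smul_apply, Matrix.sub_apply, smul_eq_mul,
    map_sum (eval p), map_mul, map_sub, map_add, ← hg.represents_Gamma _ _ _ p,
    ← hg.represents_ginv _ _ p, ← hcd _ _ _ p, ← hg.represents_frame_spd (hcd _ _ _) _ p]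
  simp only [Function.uncurry, lap11]
  refine Finset.sum_congr rfl fun a _ => Finset.sum_congr rfl fun q _ => ?_
  ring

theorem isRicciFlow_frame : hg.frame.IsRicciFlow (dirDeriv hg.isOpen (0, 1)) where
  comm _ := dirDeriv_comm hg.isOpen _ _
  matrixDeriv_g := by
    ext i j : 1
    refine eval_ext fun p => ?_
    rw [matrixDeriv_apply, ← represents_tpd hg.isOpen (hg.represents_g i j) p, Matrix.smul_apply,
      map_zsmul, ← hg.represents_Ric i j p, zsmul_eq_mul, Int.cast_neg, Int.cast_ofNat]
    exact hg.flow _ _ p.2 i j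

variable {x : Fin n → ℝ} {t : ℝ} (hxt : (x, t) ∈ W)
include hxt

theorem tpd_Gamma (l j k : Fin n) : tpd (Gamma g ginv l j k) x t =
    -cd11 g ginv j (RicUp g ginv) l k x t - cd11 g ginv k (RicUp g ginv) l j x t
      + ∑ m, ginv l m x t * cd2 g ginv m (Ric g ginv) j k x t := by
  have h := represents_tpd hg.isOpen (hg.represents_Gamma l j k) ⟨(x, t), hxt⟩
  simp only [hg.isRicciFlow_frame.deriv_Γ, map_add, map_sub, map_neg, map_sum (eval _), map_mul,
    ← hg.represents_ginv _ _ ⟨(x, t), hxt⟩, ← hg.represents_cd2_Ric _ _ _ ⟨(x, t), hxt⟩,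
    ← hg.represents_cd11 hg.represents_RicUp _ _ _ ⟨(x, t), hxt⟩] at h
  exact h

theorem tpd_RicUp (l i : Fin n) : tpd (RicUp g ginv l i) x t =
    lap11 g ginv (RicUp g ginv) l i x t + 2 * ∑ m, ∑ p, ∑ q, ginv l m x t *
      Riem g ginv q p i m x t * RicUp g ginv p q x t := by
  have h := represents_tpd hg.isOpen (hg.represents_RicUp l i) ⟨(x, t), hxt⟩
  rw [← matrixDeriv_apply, hg.isRicciFlow_frame.matrixDeriv_ricUp] at h
  have hsymm (m : Fin n) : hg.frame.riemRic m i = hg.frame.riemRic i m :=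
    congrFun₂ hg.frame.riemRic_transpose i m
  simp only [Matrix.add_apply, two_zsmul, mul_apply, hsymm] at h
  simp only [riemRic, of_apply, mul_apply, map_add, map_sum (eval _), map_mul,
    ← hg.represents_ginv _ _ ⟨(x, t), hxt⟩, ← hg.represents_Riem _ _ _ _ ⟨(x, t), hxt⟩,
    ← hg.represents_RicUp _ _ ⟨(x, t), hxt⟩,
    ← hg.represents_lap11 hg.represents_RicUp _ _ ⟨(x, t), hxt⟩] at h
  simp only [mul_assoc, ← Finset.mul_sum, mul_comm (Riem _ _ _ _ _ _ _ _), two_mul]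
  exact h

end PseudoRicciFlow

end CC

/-! ### Limits of the approximating connections -/

namespace CC

open scoped Topology

variable {n : ℕ}

theorem spd_neg (i : Fin n) (u : Fld n) : spd i (-u) = -spd i u :=
  funext₂ fun x t => by
    change fderiv ℝ (-fun y => u y t) x (Pi.single i 1) = _
    rw [fderiv_neg]
    rfl

theorem tpd_neg (u : Fld n) : tpd (-u) = -tpd u :=
  funext₂ fun _ _ => deriv.neg

theorem spd_const_smul (i : Fin n) (c : ℝ) (u : Fld n) : spd i (c • u) = c • spd i u :=
  funext₂ fun x t => by
    change fderiv ℝ (c • fun y => u y t) x (Pi.single i 1) = _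
    rw [fderiv_const_smul_field]
    rfl

theorem spd_const (i : Fin n) (c : ℝ) : spd i (fun _ _ => c) = 0 :=
  funext₂ fun _ _ => by simp [spd]

theorem tpd_const (c : ℝ) : tpd (n := n) (fun _ _ => c) = 0 :=
  funext₂ fun _ _ => by simp [tpd]

theorem spdT_congr {u v : Fld n} {x : Fin n → ℝ} {t : ℝ}
    (h : Function.uncurry u =ᶠ[𝓝 (x, t)] Function.uncurry v) (i : Fin (n + 1)) :
    spdT i u x t = spdT i v x t := by
  cases i using Fin.cases with
  | zero =>
    have h' : (fun s => u x s) =ᶠ[𝓝 t] fun s => v x s :=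
      ((Continuous.prodMk_right x).tendsto t).eventually h
    exact h'.deriv_eq
  | succ i =>
    have h' : (fun y => u y t) =ᶠ[𝓝 x] fun y => v y t :=
      ((Continuous.prodMk_left t).tendsto x).eventually h
    exact DFunLike.congr_fun h'.fderiv_eq (Pi.single i 1)

/-- The derivative terms of `R̃^l_{ijk}` involve only the row `Γ̃^l`, so they are insensitive to the
convergence of the other rows. -/
theorem tendsto_RiemT {α : Type*} {F : Filter α} {Γ : α → Con n} {Γ' : Con n} {x : Fin n → ℝ}
    {t : ℝ} {l : Fin (n + 1)}
    (hl : ∀ a i j, Function.uncurry (Γ a l i j) =ᶠ[𝓝 (x, t)] Function.uncurry (Γ' l i j))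
    (h : ∀ m i j, Tendsto (fun a => Γ a m i j x t) F (𝓝 (Γ' m i j x t))) (i j k : Fin (n + 1)) :
    Tendsto (fun a => RiemT (Γ a) l i j k x t) F (𝓝 (RiemT Γ' l i j k x t)) := by
  simp only [RiemT, spdT_congr (hl _ _ _)]
  exact tendsto_const_nhds.add (tendsto_finsetSum _ fun m _ =>
    ((h m j k).mul (h l i m)).sub ((h m i k).mul (h l j m)))

/-- The pointwise limit, as `ε → ∞`, of the Levi-Civita connections of `g̃_{ε,δ}` along the Ricci
flow. Apart from `Γ̃^0_{00}` it is the Chow–Chu connection `GammaA`. -/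
def GammaLim (g ginv : Met n) (δ : ℝ) : Con n := fun k i j =>
  Fin.cases
    (Fin.cases (Fin.cases (fun _ t => -(1 / (2 * (t + δ)))) (fun _ => 0) j) (fun _ => 0) i)
    (fun l =>
      Fin.cases
        (Fin.cases ((-(1 / 2) : ℝ) • gradScal g ginv l) (fun j => -RicUp g ginv l j) j)
        (fun i => Fin.cases (-RicUp g ginv l i) (fun j => Gamma g ginv l i j) j) i) k

section GammaE

theorem tendsto_inv_add_div_mul (R a : ℝ) {c : ℝ} (hc : 0 < c) :
    Tendsto (fun ε => (R + ε / c)⁻¹ * a) atTop (𝓝 0) := by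
  simpa using (tendsto_atTop_add_const_left atTop R
    (tendsto_id.atTop_div_const hc)).inv_tendsto_atTop.mul_const a

variable (g ginv : Met n) (ε δ : ℝ)

theorem spd_Scal_add (i : Fin n) :
    spd i (fun x t => Scal g ginv x t + ε / (2 * (t + δ))) = spd i (Scal g ginv) :=
  funext₂ fun _ _ => by simp [spd]

theorem GammaE_succ_zero_zero (l : Fin n) :
    GammaE g ginv ε δ l.succ 0 0 = (-(1 / 2) : ℝ) • gradScal g ginv l := by
  funext x t
  simp [GammaE, gradScal, Fin.sum_univ_succ, gEinv, gE, spdT, tpd_const, spd_Scal_add]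

theorem GammaE_succ_zero_succ (l j : Fin n) :
    GammaE g ginv ε δ l.succ 0 j.succ =
      fun x t => 1 / 2 * ∑ m, ginv l m x t * tpd (g j m) x t := by
  funext x t
  simp [GammaE, Fin.sum_univ_succ, gEinv, gE, spdT, spd_const]

theorem GammaE_succ_succ_zero (l i : Fin n) :
    GammaE g ginv ε δ l.succ i.succ 0 =
      fun x t => 1 / 2 * ∑ m, ginv l m x t * tpd (g i m) x t := by
  funext x t
  simp [GammaE, Fin.sum_univ_succ, gEinv, gE, spdT, spd_const]

theorem GammaE_succ_succ_succ (l i j : Fin n) :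
    GammaE g ginv ε δ l.succ i.succ j.succ = Gamma g ginv l i j := by
  funext x t
  simp [GammaE, Gamma, Fin.sum_univ_succ, gEinv, gE, spdT]

theorem GammaE_zero (i j : Fin (n + 1)) (x : Fin n → ℝ) (t : ℝ) :
    GammaE g ginv ε δ 0 i j x t = (Scal g ginv x t + ε / (2 * (t + δ)))⁻¹ *
      (1 / 2 * (spdT i (gE g ginv ε δ j 0) x t + spdT j (gE g ginv ε δ i 0) x t
        - spdT 0 (gE g ginv ε δ i j) x t)) := by
  simp only [GammaE, gEinv, Fin.sum_univ_succ, Fin.cases_zero, Fin.cases_succ, zero_mul,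
    Finset.sum_const_zero, add_zero]
  ring

variable {g ginv ε δ} {x : Fin n → ℝ} {t : ℝ}

theorem GammaE_zero_zero_zero (hR : DifferentiableAt ℝ (fun s => Scal g ginv x s) t)
    (ht : t + δ ≠ 0) : GammaE g ginv ε δ 0 0 0 x t = (Scal g ginv x t + ε / (2 * (t + δ)))⁻¹ *
      (1 / 2 * (tpd (Scal g ginv) x t - ε / (2 * (t + δ)) / (t + δ))) := by
  have hε : HasDerivAt (fun s => ε / (2 * (s + δ))) (-(ε / (2 * (t + δ)) / (t + δ))) t := by
    have h := (((hasDerivAt_id' t).add_const δ).const_mul 2).inv (by positivity)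
    exact (h.const_mul ε).congr_deriv (by field_simp)
  have h : tpd (gE g ginv ε δ 0 0) x t = _ := (hR.hasDerivAt.add hε).deriv
  rw [GammaE_zero, add_sub_cancel_left, sub_eq_add_neg]
  exact congrArg (fun y => _ * (1 / 2 * y)) h

theorem tendsto_GammaE_zero_zero_zero (hR : DifferentiableAt ℝ (fun s => Scal g ginv x s) t)
    (ht : 0 < t + δ) :
    Tendsto (fun ε => GammaE g ginv ε δ 0 0 0 x t) atTop (𝓝 (-(1 / (2 * (t + δ))))) := by
  have hc : 0 < 2 * (t + δ) := by positivity
  set R := Scal g ginv x t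
  set c := 2 * (t + δ)
  have hlim := (tendsto_inv_add_div_mul R (1 / 2 * tpd (Scal g ginv) x t + R / c) hc).const_add
    (-(1 / c))
  rw [add_zero] at hlim
  refine hlim.congr' ?_
  have hpos : ∀ᶠ ε in atTop, 0 < R + ε / c :=
    (tendsto_atTop_add_const_left atTop R
      (tendsto_id.atTop_div_const hc)).eventually_gt_atTop 0
  filter_upwards [hpos] with ε hε
  rw [GammaE_zero_zero_zero hR ht.ne']
  have hinv : (R + ε / c)⁻¹ * (R + ε / c) = 1 := inv_mul_cancel₀ hε.ne'
  have hc' : ε / c / (t + δ) = 2 * (ε / c) * (1 / c) := by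
    simp only [c]
    field_simp
  rw [hc']
  linear_combination 1 / c * hinv

theorem tendsto_GammaE_zero (hR : DifferentiableAt ℝ (fun s => Scal g ginv x s) t)
    (ht : 0 < t + δ) (i j : Fin (n + 1)) :
    Tendsto (fun ε => GammaE g ginv ε δ 0 i j x t) atTop (𝓝 (GammaLim g ginv δ 0 i j x t)) := by
  have hc : 0 < 2 * (t + δ) := by positivity
  cases i using Fin.cases with
  | zero =>
    cases j using Fin.cases with
    | zero => exact tendsto_GammaE_zero_zero_zero hR ht
    | succ j =>
      simp only [GammaE_zero, gE, spdT, Fin.cases_zero, Fin.cases_succ, tpd_const, spd_Scal_add]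
      exact tendsto_inv_add_div_mul _ _ hc
  | succ i =>
    cases j using Fin.cases with
    | zero =>
      simp only [GammaE_zero, gE, spdT, Fin.cases_zero, Fin.cases_succ, tpd_const, spd_Scal_add]
      exact tendsto_inv_add_div_mul _ _ hc
    | succ j =>
      simp only [GammaE_zero, gE, spdT, Fin.cases_zero, Fin.cases_succ, spd_const]
      exact tendsto_inv_add_div_mul _ _ hc

end GammaE

section GammaLim

variable (g ginv : Met n) {x : Fin n → ℝ} {t : ℝ}

theorem tendsto_GammaLim (ht : t ≠ 0) (m i j : Fin (n + 1)) :
    Tendsto (fun δ => GammaLim g ginv δ m i j x t) (𝓝[>] 0) (𝓝 (GammaLim g ginv 0 m i j x t)) := by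
  cases m using Fin.cases with
  | zero =>
    cases i using Fin.cases with
    | zero =>
      cases j using Fin.cases with
      | zero =>
        have hcont : ContinuousAt (fun δ => -(1 / (2 * (t + δ)))) 0 := by
          fun_prop (disch := simp [ht])
        exact hcont.tendsto.mono_left nhdsWithin_le_nhds
      | succ j => exact tendsto_const_nhds
    | succ i => exact tendsto_const_nhds
  | succ l => exact tendsto_const_nhds

variable (x t) (δ : ℝ)

theorem RiemT_GammaLim_succ_succ_succ_succ (l i j k : Fin n) :
    RiemT (GammaLim g ginv δ) l.succ i.succ j.succ k.succ x t = Riem g ginv l i j k x t := by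
  simp [RiemT, Riem, GammaLim, Fin.sum_univ_succ, spdT]

theorem RiemT_GammaLim_succ_succ_zero_zero (l i : Fin n) :
    RiemT (GammaLim g ginv δ) l.succ i.succ 0 0 x t =
      tpd (RicUp g ginv l i) x t - 1 / 2 * cdVec g ginv i (gradScal g ginv) l x t
        - ∑ m, RicUp g ginv m i x t * RicUp g ginv l m x t
        + 1 / (2 * (t + δ)) * RicUp g ginv l i x t := by
  simp only [RiemT, GammaLim, Fin.sum_univ_succ, spdT, Fin.cases_zero, Fin.cases_succ,
    spd_const_smul, tpd_neg, cdVec, Finset.sum_sub_distrib, Pi.neg_apply, Pi.smul_apply,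
    Pi.zero_apply, smul_eq_mul, neg_mul_neg, mul_add, Finset.mul_sum]
  have h (m : Fin n) : -(1 / 2) * gradScal g ginv m x t * Gamma g ginv l i m x t =
      -(1 / 2 * (Gamma g ginv l i m x t * gradScal g ginv m x t)) := by ring
  simp only [h, Finset.sum_neg_distrib]
  ring

end GammaLim

end CC

namespace CC.PseudoRicciFlow

open scoped Topology

variable {n : ℕ} {W : Set ((Fin n → ℝ) × ℝ)} {g ginv : Met n} (hg : PseudoRicciFlow W g ginv)
  {x : Fin n → ℝ} {t : ℝ} (hxt : (x, t) ∈ W)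
include hg hxt

theorem GammaE_succ_eventuallyEq (ε δ : ℝ) (l : Fin n) (i j : Fin (n + 1)) :
    Function.uncurry (GammaE g ginv ε δ l.succ i j)
      =ᶠ[𝓝 (x, t)] Function.uncurry (GammaLim g ginv δ l.succ i j) := by
  have hW := hg.isOpen.mem_nhds hxt
  have hflow {p : (Fin n → ℝ) × ℝ} (hp : p ∈ W) (k : Fin n) :
      1 / 2 * ∑ m, ginv l m p.1 p.2 * tpd (g k m) p.1 p.2 = -RicUp g ginv l k p.1 p.2 := by
    simp only [hg.flow _ _ hp, RicUp, Finset.mul_sum, ← Finset.sum_neg_distrib]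
    exact Finset.sum_congr rfl fun _ _ => by ring
  cases i using Fin.cases with
  | zero =>
    cases j using Fin.cases with
    | zero => exact .of_eq (congrArg Function.uncurry (GammaE_succ_zero_zero g ginv ε δ l))
    | succ j =>
      rw [GammaE_succ_zero_succ]
      filter_upwards [hW] with p hp using hflow hp j
  | succ i =>
    cases j using Fin.cases with
    | zero =>
      rw [GammaE_succ_succ_zero]
      filter_upwards [hW] with p hp using hflow hp i
    | succ j => exact .of_eq (congrArg Function.uncurry (GammaE_succ_succ_succ g ginv ε δ l i j))

theorem tendsto_GammaE {δ : ℝ} (ht : 0 < t + δ) (m i j : Fin (n + 1)) :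
    Tendsto (fun ε => GammaE g ginv ε δ m i j x t) atTop (𝓝 (GammaLim g ginv δ m i j x t)) := by
  cases m using Fin.cases with
  | zero =>
    have hR := hg.represents_Scal.differentiableAt hg.isOpen ⟨(x, t), hxt⟩
    exact tendsto_GammaE_zero (hasDerivAt_time hR).differentiableAt ht i j
  | succ l =>
    exact tendsto_const_nhds.congr fun ε =>
      (hg.GammaE_succ_eventuallyEq hxt ε δ l i j).eq_of_nhds.symm

theorem tendsto_RiemT_GammaE {δ : ℝ} (ht : 0 < t + δ) (l : Fin n) (i j k : Fin (n + 1)) :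
    Tendsto (fun ε => RiemT (GammaE g ginv ε δ) l.succ i j k x t) atTop
      (𝓝 (RiemT (GammaLim g ginv δ) l.succ i j k x t)) :=
  tendsto_RiemT (fun ε => hg.GammaE_succ_eventuallyEq hxt ε δ l) (hg.tendsto_GammaE hxt ht) i j k

theorem tendsto_limUnder_RiemT_GammaE (ht : 0 < t) (l : Fin n) (i j k : Fin (n + 1)) :
    Tendsto (fun δ => limUnder atTop fun ε => RiemT (GammaE g ginv ε δ) l.succ i j k x t)
      (𝓝[>] 0) (𝓝 (RiemT (GammaLim g ginv 0) l.succ i j k x t)) := by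
  have h := tendsto_RiemT (Γ := GammaLim g ginv) (l := l.succ) (fun _ _ _ => .rfl)
    (tendsto_GammaLim g ginv ht.ne' (x := x)) i j k
  refine h.congr' (eventually_mem_nhdsWithin.mono fun δ hδ => ?_)
  exact (hg.tendsto_RiemT_GammaE hxt (add_pos ht hδ) l i j k).limUnder_eq.symm

theorem RiemT_GammaLim_succ_zero_succ_succ (δ : ℝ) (l j k : Fin n) :
    RiemT (GammaLim g ginv δ) l.succ 0 j.succ k.succ x t =
      -cd11 g ginv k (RicUp g ginv) l j x t
        + ∑ m, ginv l m x t * cd2 g ginv m (Ric g ginv) j k x t := by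
  have h : RiemT (GammaLim g ginv δ) l.succ 0 j.succ k.succ x t =
      tpd (Gamma g ginv l j k) x t + cd11 g ginv j (RicUp g ginv) l k x t := by
    simp only [RiemT, GammaLim, Fin.sum_univ_succ, spdT, Fin.cases_zero, Fin.cases_succ, spd_neg,
      cd11, Finset.sum_sub_distrib, Pi.neg_apply, neg_mul, mul_neg, Finset.sum_neg_distrib,
      Pi.zero_apply, mul_comm]
    ring
  rw [h, hg.tpd_Gamma hxt]
  ring

end CC.PseudoRicciFlow

section

open CC

theorem approx_curvature_limit_general {n : ℕ} {W : Set ((Fin n → ℝ) × ℝ)} {g ginv : Met n}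
    (hg : PseudoRicciFlow W g ginv) {x : Fin n → ℝ} {t : ℝ} (hxt : (x, t) ∈ W) (ht : 0 < t) :
    (∀ δ > (0 : ℝ), ∀ i j k l : Fin n,
      Tendsto (fun ε => RiemT (GammaE g ginv ε δ) l.succ i.succ j.succ k.succ x t) atTop
        (nhds (Riem g ginv l i j k x t))) ∧
    (∀ δ > (0 : ℝ), ∀ j k l : Fin n,
      Tendsto (fun ε => RiemT (GammaE g ginv ε δ) l.succ 0 j.succ k.succ x t) atTop
        (nhds (-cd11 g ginv k (RicUp g ginv) l j x t
          + ∑ m, ginv l m x t * cd2 g ginv m (Ric g ginv) j k x t))) ∧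
    (∀ i l : Fin n,
      Tendsto (fun δ => limUnder atTop
          (fun ε => RiemT (GammaE g ginv ε δ) l.succ i.succ 0 0 x t))
        (nhdsWithin 0 (Set.Ioi 0))
        (nhds (tpd (RicUp g ginv l i) x t
          - (1 / 2) * cdVec g ginv i (gradScal g ginv) l x t
          - (∑ m, RicUp g ginv m i x t * RicUp g ginv l m x t)
          + (1 / (2 * t)) * RicUp g ginv l i x t))) ∧
    (∀ i l : Fin n,
      tpd (RicUp g ginv l i) x t
        - (1 / 2) * cdVec g ginv i (gradScal g ginv) l x t
        - (∑ m, RicUp g ginv m i x t * RicUp g ginv l m x t)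
        + (1 / (2 * t)) * RicUp g ginv l i x t =
      lap11 g ginv (RicUp g ginv) l i x t
        - (1 / 2) * cdVec g ginv i (gradScal g ginv) l x t
        + 2 * (∑ m, ∑ p, ∑ q, ginv l m x t *
            Riem g ginv q p i m x t * RicUp g ginv p q x t)
        - (∑ m, RicUp g ginv m i x t * RicUp g ginv l m x t)
        + (1 / (2 * t)) * RicUp g ginv l i x t) := by
  have hlim {δ : ℝ} (hδ : 0 < δ) := hg.tendsto_RiemT_GammaE hxt (add_pos ht hδ)
  refine ⟨fun δ hδ i j k l => ?_, fun δ hδ j k l => ?_, fun i l => ?_, fun i l => ?_⟩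
  · rw [← RiemT_GammaLim_succ_succ_succ_succ g ginv x t δ]
    exact hlim hδ l i.succ j.succ k.succ
  · rw [← hg.RiemT_GammaLim_succ_zero_succ_succ hxt δ]
    exact hlim hδ l 0 j.succ k.succ
  · have h := hg.tendsto_limUnder_RiemT_GammaE hxt ht l i.succ 0 0
    rwa [RiemT_GammaLim_succ_succ_zero_zero, add_zero] at h
  · rw [hg.tpd_RicUp hxt]
    ring

end

/-- Theorem 4.5(2) of Chow–Chu. As `ε → ∞`, the curvature
components of `g̃_{ε,δ}` converge to the spatial curvature and to `−∇_kR^l_j + ∇^lR_{jk}`;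
and the iterated limit (`ε → ∞`, then `δ → 0⁺`) of `R̃^l_{i00}` is exactly the
`(W,W)`-component of Hamilton's Harnack expression `Z + (1/(2t)) R_{ij}W_iW_j`. -/
theorem approx_curvature_limit (n : ℕ) (hn : 2 ≤ n)
    (Ωs : Set (Fin n → ℝ)) (T : ℝ)
    (g ginv : CC.Met n) (hg : CC.RicciFlow Ωs T g ginv)
    (x : Fin n → ℝ) (hx : x ∈ Ωs) (t : ℝ) (ht : t ∈ Set.Ioo (0:ℝ) T) :
    (∀ δ > (0:ℝ), ∀ i j k l : Fin n,
      Filter.Tendsto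
        (fun ε => CC.RiemT (CC.GammaE g ginv ε δ) l.succ i.succ j.succ k.succ x t)
        Filter.atTop (nhds (CC.Riem g ginv l i j k x t))) ∧
    (∀ δ > (0:ℝ), ∀ j k l : Fin n,
      Filter.Tendsto
        (fun ε => CC.RiemT (CC.GammaE g ginv ε δ) l.succ 0 j.succ k.succ x t)
        Filter.atTop
        (nhds (- CC.cd11 g ginv k (CC.RicUp g ginv) l j x t
          + ∑ m, ginv l m x t * CC.cd2 g ginv m (CC.Ric g ginv) j k x t))) ∧
    (∀ i l : Fin n,
      Filter.Tendsto
        (fun δ => limUnder Filter.atTop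
          (fun ε => CC.RiemT (CC.GammaE g ginv ε δ) l.succ i.succ 0 0 x t))
        (nhdsWithin 0 (Set.Ioi 0))
        (nhds (CC.tpd (CC.RicUp g ginv l i) x t
          - (1/2) * CC.cdVec g ginv i (CC.gradScal g ginv) l x t
          - (∑ m, CC.RicUp g ginv m i x t * CC.RicUp g ginv l m x t)
          + (1 / (2 * t)) * CC.RicUp g ginv l i x t))) ∧
    -- the two expressions for the limiting `(i,l)`-component agree
    (∀ i l : Fin n,
      CC.tpd (CC.RicUp g ginv l i) x t
        - (1/2) * CC.cdVec g ginv i (CC.gradScal g ginv) l x t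
        - (∑ m, CC.RicUp g ginv m i x t * CC.RicUp g ginv l m x t)
        + (1 / (2 * t)) * CC.RicUp g ginv l i x t =
      CC.lap11 g ginv (CC.RicUp g ginv) l i x t
        - (1/2) * CC.cdVec g ginv i (CC.gradScal g ginv) l x t
        + 2 * (∑ m, ∑ p, ∑ q, ginv l m x t *
            CC.Riem g ginv q p i m x t * CC.RicUp g ginv p q x t)
        - (∑ m, CC.RicUp g ginv m i x t * CC.RicUp g ginv l m x t)
        + (1 / (2 * t)) * CC.RicUp g ginv l i x t) :=
  approx_curvature_limit_general hg.pseudoRicciFlow ⟨hx, ht⟩ ht.1
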